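/- There is an absolute constant C with the following property. Let L₁(u,v), L₂(u,v), M₁(u,v), M₂(u,v) ∈ ℤ[u, v] be nonzero linear forms such that no two of them are proportional, except possibly L₁ and M₁, or L₂ and M₂. Put F = L₁²M₁³ + L₂²M₂³. Then for all real X, Y ≥ 1, the number μ(X, Y) of pairs of integers (x, y) with |x| ≤ X, |y| ≤ Y for which F(x, y) is a nonzero perfect square satisfies μ(X, Y) ≤ C (XY)^{2/3} (log(2‖F‖XY))², unless there exist nonzero rationals g and ν such that L₁(u, v) = ν(4M₁(u, v) − 5g²M₂(u, v)) and L₂(u, v) = νg³(5M₁(u, v) − 4g²M₂(u, v)) identically. -/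

import Mathlib

section

open MvPolynomial


/-- The maximum of the absolute values of the coefficients of an integral polynomial. -/
def polyNorm (F : MvPolynomial (Fin 2) ℤ) : ℕ :=
  F.support.sup fun d => (F.coeff d).natAbs

/-- The linear form in `ℤ[u, v]` with coefficient pair `L`. -/
noncomputable def linForm (L : ℤ × ℤ) : MvPolynomial (Fin 2) ℤ :=
  C L.1 * X 0 + C L.2 * X 1

/-- Two linear forms are proportional if one is a rational multiple of the other. -/
def Proportional (L M : ℤ × ℤ) : Prop :=
  (∃ t : ℚ, (L.1 : ℚ) = t * M.1 ∧ (L.2 : ℚ) = t * M.2) ∨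
  (∃ t : ℚ, (M.1 : ℚ) = t * L.1 ∧ (M.2 : ℚ) = t * L.2)

end

section

open Polynomial

namespace Quintic

/-- the iterated operator of the Stepanov method -/
noncomputable def stepIt {K : Type*} [Field K] (f : K[X]) (N : K) : ℕ → K[X] →ₗ[K] K[X]
  | 0 => LinearMap.id
  | k + 1 => (LinearMap.mulLeft K (C (N - k) * derivative f) +
      LinearMap.mulLeft K f ∘ₗ derivative) ∘ₗ stepIt f N k

theorem stepIt_succ {K : Type*} [Field K] (f : K[X]) (N : K) (k : ℕ) (r : K[X]) :
    stepIt f N (k + 1) r =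
      C (N - k) * derivative f * stepIt f N k r + f * derivative (stepIt f N k r) := by
  simp [stepIt, mul_assoc]

theorem stepIt_zero {K : Type*} [Field K] (f : K[X]) (N : K) (r : K[X]) :
    stepIt f N 0 r = r := by
  simp [stepIt]

theorem stepIt_degree {K : Type*} [Field K] (f : K[X]) (hf : f.natDegree ≤ 6) (N : K) (r : K[X])
    (d : ℕ) (hr : r.degree < d) (k : ℕ) :
    (stepIt f N k r).degree < ((d + 5 * k : ℕ) : WithBot ℕ) := by
  induction k with
  | zero => simpa [stepIt_zero] using hr
  | succ k ih =>
    rw [stepIt_succ]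
    by_cases h0 : stepIt f N k r = 0
    · rw [h0]; simp only [mul_zero, derivative_zero, add_zero, degree_zero]
      exact WithBot.bot_lt_coe _
    have hlt : (stepIt f N k r).natDegree < d + 5 * k := by
      rwa [Polynomial.natDegree_lt_iff_degree_lt h0]
    have hd : (derivative f).natDegree ≤ 5 := by
      have := natDegree_derivative_le f; omega
    refine lt_of_le_of_lt (degree_add_le _ _) (max_lt ?_ ?_)
    · refine lt_of_le_of_lt degree_le_natDegree ?_
      have h1 := natDegree_mul_le (p := C (N - k) * derivative f) (q := stepIt f N k r)
      have h2 := natDegree_C_mul_le (N - k) (derivative f)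
      norm_cast
      omega
    · by_cases hz : derivative (stepIt f N k r) = 0
      · rw [hz]; simp only [mul_zero, degree_zero]
        exact WithBot.bot_lt_coe _
      refine lt_of_le_of_lt degree_le_natDegree ?_
      have h1 := natDegree_mul_le (p := f) (q := derivative (stepIt f N k r))
      have h2 : (derivative (stepIt f N k r)).natDegree < (stepIt f N k r).natDegree := by
        apply natDegree_derivative_lt
        intro h
        apply hz
        rw [eq_C_of_natDegree_eq_zero h]; simp
      norm_cast
      omega

theorem step_deriv {p : ℕ} [Fact p.Prime] (f : (ZMod p)[X]) (l e J : ℕ)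
    (r s : Fin J → (ZMod p)[X]) (k : ℕ) (hk : k ≤ l) :
    derivative^[k] (f ^ l * ∑ j, (r j + s j * f ^ e) * X ^ (j.1 * p)) =
      f ^ (l - k) * ∑ j, (stepIt f (l : ZMod p) k (r j) +
        stepIt f ((l + e : ℕ) : ZMod p) k (s j) * f ^ e) * X ^ (j.1 * p) := by
  induction k with
  | zero => simp [stepIt_zero]
  | succ k ih =>
    rw [Function.iterate_succ_apply', ih (by omega)]
    simp only [Finset.mul_sum, derivative_sum]
    apply Finset.sum_congr rfl
    intro j _
    obtain ⟨n, hn⟩ : ∃ n, l = k + 1 + n := ⟨l - (k+1), by omega⟩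
    have e1 : l - k = n + 1 := by omega
    have e2 : l - (k + 1) = n := by omega
    rw [e1, e2]
    simp only [derivative_mul, derivative_add, derivative_X_pow, stepIt_succ]
    have hz : (((j.1 * p : ℕ) : ZMod p)) = 0 := by simp
    rw [derivative_pow, derivative_pow, hz]
    have hc : ((l : ZMod p) - k) = ((n + 1 : ℕ) : ZMod p) := by rw [hn]; push_cast; ring
    have hc2 : (((l + e : ℕ) : ZMod p) - k) = ((n + 1 : ℕ) : ZMod p) + ((e : ℕ) : ZMod p) := by
      rw [hn]; push_cast; ring
    rw [hc, hc2]
    simp only [map_zero, zero_mul, mul_zero, add_zero, Nat.add_sub_cancel, map_add]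
    rcases e with _ | e
    · simp; ring
    · simp only [Nat.add_sub_cancel]; ring

theorem step_nonzero {p : ℕ} [Fact p.Prime] (hp2 : p ≠ 2) (f : (ZMod p)[X]) (hf : f.natDegree ≤ 6)
    (hf0 : f.eval 0 ≠ 0) (hns : ∀ (c : ZMod p) (h : (ZMod p)[X]), f ≠ C c * h ^ 2)
    (d J : ℕ) (hd : 2 * d + 5 ≤ p)
    (r s : Fin J → (ZMod p)[X]) (hr : ∀ j, (r j).degree < d) (hs : ∀ j, (s j).degree < d)
    (h0 : ∑ j, (r j + s j * f ^ ((p - 1) / 2)) * X ^ (j.1 * p) = 0) :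
    (∀ j, r j = 0) ∧ (∀ j, s j = 0) := by
  have hp : p.Prime := Fact.out
  have key : ∀ n : ℕ, ∀ j : Fin J, j.1 = n → r j = 0 ∧ s j = 0 := by
    intro n
    induction n using Nat.strong_induction_on with
    | _ n ih =>
      intro j hj
      -- the j-th term is divisible by X^((n+1)p)
      have h1 : (X : (ZMod p)[X]) ^ ((n + 1) * p) ∣
          (r j + s j * f ^ ((p - 1) / 2)) * X ^ (j.1 * p) := by
        rw [← Finset.add_sum_erase _ _ (Finset.mem_univ j)] at h0
        rw [eq_neg_of_add_eq_zero_left h0]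
        rw [dvd_neg]
        apply Finset.dvd_sum
        intro i hi
        have hne : i ≠ j := (Finset.mem_erase.1 hi).1
        have hne' : i.1 ≠ n := fun h => hne (Fin.ext (h.trans hj.symm))
        rcases lt_or_gt_of_ne hne' with hlt | hgt
        · obtain ⟨a, b⟩ := ih i.1 hlt i rfl
          simp [a, b]
        · exact Dvd.dvd.mul_left (pow_dvd_pow _ (Nat.mul_le_mul_right _ hgt)) _
      rw [hj, add_mul, one_mul, pow_add, mul_comm (X ^ (n * p))] at h1
      have h2 := (mul_dvd_mul_iff_right (pow_ne_zero _ X_ne_zero)).1 h1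
      -- square
      have h3 : (X : (ZMod p)[X]) ^ p ∣ r j ^ 2 * f - C (f.eval 0) * s j ^ 2 := by
        have hfp : f * (f ^ ((p - 1) / 2)) ^ 2 = f ^ p := by
          rw [← pow_mul, ← pow_succ']
          congr 1
          have := hp.eq_two_or_odd
          omega
        have hfr : (X : (ZMod p)[X]) ^ p ∣ f ^ p - C (f.eval 0) := by
          have : f ^ p = expand (ZMod p) p f := by
            rw [ZMod.expand_card]
          rw [this]
          have hX : (X : (ZMod p)[X]) ∣ f - C (f.eval 0) := by
            rw [X_dvd_iff]; simp [coeff_zero_eq_eval_zero]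
          obtain ⟨g, hg⟩ := hX
          have := congrArg (expand (ZMod p) p) hg
          simp only [map_sub, map_mul, expand_X, expand_C] at this
          rw [this]; exact dvd_mul_right _ _
        have e1 : r j ^ 2 * f - C (f.eval 0) * s j ^ 2 =
            (r j + s j * f ^ ((p - 1) / 2)) * ((r j - s j * f ^ ((p - 1) / 2)) * f) +
            s j ^ 2 * (f ^ p - C (f.eval 0)) := by
          rw [← hfp]; ring
        rw [e1]
        exact dvd_add (Dvd.dvd.mul_right h2 _) (Dvd.dvd.mul_left hfr _)
      have h4 : r j ^ 2 * f - C (f.eval 0) * s j ^ 2 = 0 := by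
        by_contra hne
        have hdeg := natDegree_le_of_dvd h3 hne
        rw [natDegree_X_pow] at hdeg
        have hr' : (r j).natDegree ≤ d - 1 := by
          by_cases h : r j = 0
          · simp [h]
          · have := (natDegree_lt_iff_degree_lt h).2 (hr j); omega
        have hs' : (s j).natDegree ≤ d - 1 := by
          by_cases h : s j = 0
          · simp [h]
          · have := (natDegree_lt_iff_degree_lt h).2 (hs j); omega
        have a1 := natDegree_sub_le (r j ^ 2 * f) (C (f.eval 0) * s j ^ 2)
        have a2 := natDegree_mul_le (p := r j ^ 2) (q := f)
        have a3 := natDegree_pow_le (p := r j) (n := 2)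
        have a4 := natDegree_C_mul_le (f.eval 0) (s j ^ 2)
        have a5 := natDegree_pow_le (p := s j) (n := 2)
        have hd1 : 1 ≤ d := by
          by_contra hd0
          have : d = 0 := by omega
          subst this
          have b1 : r j = 0 := by
            have := hr j
            simpa [Nat.WithBot.lt_zero_iff] using this
          have b2 : s j = 0 := by
            have := hs j
            simpa [Nat.WithBot.lt_zero_iff] using this
          apply hne; simp [b1, b2]
        rcases max_choice (r j ^ 2 * f).natDegree (C (f.eval 0) * s j ^ 2).natDegree with hm | hm <;>
          rw [hm] at a1 <;> omega
      have h5 : r j ^ 2 * f = C (f.eval 0) * s j ^ 2 := sub_eq_zero.1 h4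
      by_cases hrz : r j = 0
      · refine ⟨hrz, ?_⟩
        rw [hrz] at h5
        have : C (f.eval 0) * s j ^ 2 = 0 := by rw [← h5]; ring
        rcases mul_eq_zero.1 this with h | h
        · exact absurd (C_eq_zero.1 h) hf0
        · exact pow_eq_zero_iff (two_ne_zero) |>.1 h
      · exfalso
        have h6 : r j ^ 2 ∣ s j ^ 2 := by
          refine ⟨C (f.eval 0)⁻¹ * f, ?_⟩
          calc s j ^ 2 = C ((f.eval 0)⁻¹ * f.eval 0) * s j ^ 2 := by
                rw [inv_mul_cancel₀ hf0]; simp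
            _ = C ((f.eval 0)⁻¹) * (C (f.eval 0) * s j ^ 2) := by rw [C_mul]; ring
            _ = _ := by rw [← h5]; ring
        obtain ⟨h, hh⟩ := (UniqueFactorizationMonoid.pow_dvd_pow_iff_dvd two_ne_zero).1 h6
        apply hns (f.eval 0) h
        have h7 : r j ^ 2 * f = r j ^ 2 * (C (f.eval 0) * h ^ 2) := by rw [h5, hh]; ring
        exact mul_left_cancel₀ (pow_ne_zero _ hrz) h7
  exact ⟨fun j => (key j.1 j rfl).1, fun j => (key j.1 j rfl).2⟩

end Quintic

end

section

open Polynomial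

namespace Quintic

theorem step_exists {p : ℕ} [Fact p.Prime] (f : (ZMod p)[X]) (hf : f.natDegree ≤ 6)
    (a : ZMod p) (l e J d : ℕ) (hcount : l * (d + 5 * l + J) < 2 * (J * d)) :
    ∃ r s : Fin J → (ZMod p)[X], (∀ j, (r j).degree < d) ∧ (∀ j, (s j).degree < d) ∧
      ¬ ((∀ j, r j = 0) ∧ (∀ j, s j = 0)) ∧
      ∀ k < l, ∑ j, (stepIt f (l : ZMod p) k (r j) +
        C a * stepIt f ((l + e : ℕ) : ZMod p) k (s j)) * X ^ j.1 = 0 := by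
  classical
  let K := ZMod p
  let E := d + 5 * l + J
  let ι : (Fin d → K) →ₗ[K] K[X] :=
    (degreeLT K d).subtype ∘ₗ (degreeLTEquiv K d).symm.toLinearMap
  let Q : ((Fin J → Fin d → K) × (Fin J → Fin d → K)) → ℕ → K[X] := fun v k =>
    ∑ j, (stepIt f (l : ZMod p) k (ι (v.1 j)) +
        C a * stepIt f ((l + e : ℕ) : ZMod p) k (ι (v.2 j))) * X ^ j.1
  let T : ((Fin J → Fin d → K) × (Fin J → Fin d → K)) →ₗ[K] (Fin l → Fin E → K) :=
    { toFun := fun v k n => (Q v k.1).coeff n.1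
      map_add' := by
        intro v w
        ext k n
        simp only [Q, Prod.fst_add, Prod.snd_add, Pi.add_apply, map_add, ← coeff_add,
          ← Finset.sum_add_distrib]
        congr 2
        ext1 j
        ring
      map_smul' := by
        intro c v
        ext k n
        simp only [Q, Prod.smul_fst, Prod.smul_snd, Pi.smul_apply, map_smul, RingHom.id_apply,
          ← coeff_smul, Finset.smul_sum]
        congr 2
        ext1 j
        simp only [smul_eq_C_mul]
        ring }
  have hker : LinearMap.ker T ≠ ⊥ := by
    apply LinearMap.ker_ne_bot_of_finrank_lt
    simp only [Module.finrank_prod, Module.finrank_pi_fintype, Module.finrank_self,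
      Finset.sum_const, Finset.card_univ, Fintype.card_fin, smul_eq_mul, mul_one]
    simp only [E]; omega
  obtain ⟨v, hv, hv0⟩ := Submodule.exists_mem_ne_zero_of_ne_bot hker
  have hι : ∀ w, (ι w).degree < d := fun w => by
    have := ((degreeLTEquiv K d).symm w).2
    rwa [mem_degreeLT] at this
  have hι0 : ∀ w, ι w = 0 → w = 0 := fun w hw => by
    have h1 : (degreeLTEquiv K d).symm w = 0 := Subtype.ext hw
    simpa using h1
  refine ⟨fun j => ι (v.1 j), fun j => ι (v.2 j), fun j => hι _, fun j => hι _, ?_, ?_⟩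
  · rintro ⟨h1, h2⟩
    apply hv0
    refine Prod.ext (funext fun j => hι0 _ (h1 j)) (funext fun j => hι0 _ (h2 j))
  · intro k hk
    change Q v k = 0
    have hT : T v = 0 := hv
    have hdeg : (Q v k).degree < ((E : ℕ) : WithBot ℕ) := by
      apply lt_of_le_of_lt (degree_sum_le _ _)
      rw [Finset.sup_lt_iff (WithBot.bot_lt_coe _)]
      intro j _
      have h1 := stepIt_degree f hf (l : ZMod p) (ι (v.1 j)) d (hι _) k
      have h2 := stepIt_degree f hf ((l + e : ℕ) : ZMod p) (ι (v.2 j)) d (hι _) k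
      have h3 : (stepIt f (l : ZMod p) k (ι (v.1 j)) +
        C a * stepIt f ((l + e : ℕ) : ZMod p) k (ι (v.2 j))).degree
          < ((d + 5 * k : ℕ) : WithBot ℕ) := by
        refine lt_of_le_of_lt (degree_add_le _ _) (max_lt h1 ?_)
        rw [← smul_eq_C_mul]
        exact lt_of_le_of_lt (degree_smul_le _ _) h2
      generalize (stepIt f (l : ZMod p) k (ι (v.1 j)) +
        C a * stepIt f ((l + e : ℕ) : ZMod p) k (ι (v.2 j))) = g at h3
      by_cases hg : g = 0
      · rw [hg]; simp only [zero_mul, degree_zero]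
        exact WithBot.bot_lt_coe _
      have h4 := (natDegree_lt_iff_degree_lt hg).2 h3
      refine lt_of_le_of_lt degree_le_natDegree ?_
      have h5 := natDegree_mul_le (p := g) (q := (X : (ZMod p)[X]) ^ j.1)
      rw [natDegree_X_pow] at h5
      have := j.2
      norm_cast
      simp only [E]
      have : 5 * k ≤ 5 * l := by omega
      omega
    ext n
    rw [coeff_zero]
    by_cases hn : n < E
    · exact congrFun (congrFun hT ⟨k, hk⟩) ⟨n, hn⟩
    · apply coeff_eq_zero_of_degree_lt
      refine lt_of_lt_of_le hdeg ?_
      exact_mod_cast not_lt.1 hn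

theorem step_count {p : ℕ} [Fact p.Prime] (hp100 : 100 < p) (f : (ZMod p)[X])
    (hf : f.natDegree ≤ 6)
    (hf0 : f.eval 0 ≠ 0) (hns : ∀ (c : ZMod p) (h : (ZMod p)[X]), f ≠ C c * h ^ 2)
    (a : ZMod p) (w : ℕ) (hw0 : 0 < w) (hw : 4 * w ^ 2 ≤ p) (S : Finset (ZMod p))
    (hS : ∀ x ∈ S, (f.eval x) ^ ((p - 1) / 2) = a) :
    2 * w * S.card ≤ 12 * w + (w + 13) * p := by
  have hp : p.Prime := Fact.out
  have hodd : p % 2 = 1 := by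
    rcases hp.eq_two_or_odd with h | h <;> omega
  obtain ⟨d, hd⟩ : ∃ d, p = 2 * d + 5 := ⟨(p - 5) / 2, by omega⟩
  set e := (p - 1) / 2 with he
  have hwp : 2 * w < p := by nlinarith
  have hcount : (2 * w) * (d + 5 * (2 * w) + (w + 10)) < 2 * ((w + 10) * d) := by
    have : 10 * w ≤ p := by nlinarith [sq_nonneg ((w : ℤ) - 1)]
    nlinarith
  obtain ⟨r, s, hr, hs, hnz, hz⟩ := step_exists f hf a (2 * w) e (w + 10) d hcount
  have hfne : f ≠ 0 := by rintro rfl; simp at hf0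
  set R := f ^ (2 * w) * ∑ j, (r j + s j * f ^ e) * X ^ (j.1 * p) with hR
  have hR0 : R ≠ 0 := by
    intro h
    rcases mul_eq_zero.1 h with h1 | h1
    · exact hfne (pow_eq_zero_iff (by omega) |>.1 h1)
    · exact hnz (step_nonzero (by omega) f hf hf0 hns d (w + 10) (by omega) r s hr hs h1)
  have hmult : ∀ x ∈ S, 2 * w ≤ R.rootMultiplicity x := by
    intro x hx
    have : 2 * w - 1 < R.rootMultiplicity x := by
      apply lt_rootMultiplicity_of_isRoot_iterate_derivative_of_mem_nonZeroDivisors' hR0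
      · intro k hk
        rw [hR, step_deriv f (2 * w) e (w + 10) r s k (by omega), IsRoot, eval_mul]
        have h1 := congrArg (eval x) (hz k (by omega))
        rw [eval_finsetSum, eval_zero] at h1
        rw [eval_finsetSum]
        convert mul_zero _
        rw [← h1]
        apply Finset.sum_congr rfl
        intro j _
        simp only [eval_mul, eval_add, eval_pow, eval_X, eval_C]
        rw [hS x hx, mul_comm j.1 p, pow_mul, ZMod.pow_card]
        ring
      · intro m hm hm0
        rw [mem_nonZeroDivisors_iff_ne_zero]
        intro h
        rw [ZMod.natCast_eq_zero_iff] at h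
        have := Nat.le_of_dvd (Nat.pos_of_ne_zero hm0) h
        omega
    omega
  have hdeg : R.natDegree ≤ 12 * w + (w + 13) * p := by
    rw [hR]
    refine (natDegree_mul_le).trans ?_
    have h1 : (f ^ (2 * w)).natDegree ≤ 2 * w * 6 := natDegree_pow_le.trans (Nat.mul_le_mul_left _ hf)
    have h2 : (∑ j, (r j + s j * f ^ e) * X ^ (j.1 * p)).natDegree ≤ (w + 13) * p := by
      apply natDegree_sum_le_of_forall_le
      intro j _
      have b1 := natDegree_mul_le (p := r j + s j * f ^ e) (q := (X : (ZMod p)[X]) ^ (j.1 * p))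
      rw [natDegree_X_pow] at b1
      have b2 : (r j).natDegree ≤ d := natDegree_le_of_degree_le (hr j).le
      have b3 : (s j).natDegree ≤ d := natDegree_le_of_degree_le (hs j).le
      have b4 := natDegree_mul_le (p := s j) (q := f ^ e)
      have b5 : (f ^ e).natDegree ≤ e * 6 := natDegree_pow_le.trans (Nat.mul_le_mul_left _ hf)
      have b6 := natDegree_add_le (r j) (s j * f ^ e)
      have b7 : max (r j).natDegree (s j * f ^ e).natDegree ≤ d + e * 6 := by
        apply max_le <;> omega
      have b8 : j.1 ≤ w + 9 := by have := j.2; omega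
      have b9 : j.1 * p ≤ (w + 9) * p := Nat.mul_le_mul_right _ b8
      have b10 : (w + 13) * p = (w + 9) * p + 4 * p := by ring
      omega
    omega
  have h1 : ∑ x ∈ S, R.rootMultiplicity x ≤ R.natDegree := by
    have : ∑ x ∈ S, R.rootMultiplicity x = ∑ x ∈ S, R.roots.count x := by
      simp [count_roots]
    rw [this]
    refine le_trans ?_ (card_roots' R)
    rw [← Multiset.toFinset_sum_count_eq R.roots]
    apply Finset.sum_le_sum_of_ne_zero
    intro x _ hx
    rw [Multiset.mem_toFinset]
    exact Multiset.count_ne_zero.1 hx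
  have h2 : S.card * (2 * w) ≤ ∑ x ∈ S, R.rootMultiplicity x := by
    rw [← smul_eq_mul]; exact Finset.card_nsmul_le_sum _ _ _ hmult
  nlinarith

end Quintic

end

section

open Polynomial

namespace Quintic

theorem weil_aux {p : ℕ} [Fact p.Prime] (hp100 : 100 < p) (f : (ZMod p)[X])
    (hf : f.natDegree ≤ 6)
    (hf0 : f.eval 0 ≠ 0) (hns : ∀ (c : ZMod p) (h : (ZMod p)[X]), f ≠ C c * h ^ 2) :
    |((∑ x : ZMod p, quadraticChar (ZMod p) (f.eval x) : ℤ) : ℝ)| ≤ 60 * √(p : ℝ) := by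
  classical
  have hp : p.Prime := Fact.out
  have hodd : p % 2 = 1 := by
    rcases hp.eq_two_or_odd with h | h <;> omega
  have hchar : ringChar (ZMod p) ≠ 2 := by rw [ZMod.ringChar_zmod_n]; omega
  have hfne : f ≠ 0 := by rintro rfl; simp at hf0
  set q := Nat.sqrt p with hq
  have hq1 : q * q ≤ p := Nat.sqrt_le p
  have hq2 : p < (q + 1) * (q + 1) := Nat.lt_succ_sqrt p
  have hq10 : 10 ≤ q := by
    rw [hq, Nat.le_sqrt]; omega
  obtain ⟨w, hw⟩ : ∃ w, w = q / 2 := ⟨_, rfl⟩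
  have hw0 : 0 < w := by omega
  have hw4 : 4 * w ^ 2 ≤ p := by
    have : 2 * w ≤ q := by omega
    nlinarith
  have hp16 : p ≤ 16 * w ^ 2 := by
    have : q + 1 ≤ 4 * w := by omega
    nlinarith
  have hN : ∀ (a : ZMod p) (S : Finset (ZMod p)),
      (∀ x ∈ S, (f.eval x) ^ ((p - 1) / 2) = a) → (S.card : ℝ) ≤ p / 2 + 6 + 26 * √(p : ℝ) := by
    intro a S hS
    have h := step_count hp100 f hf hf0 hns a w hw0 hw4 S hS
    have h' : 2 * (w : ℝ) * S.card ≤ 12 * w + (w + 13) * p := by exact_mod_cast h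
    have hwpos : (0 : ℝ) < w := by exact_mod_cast hw0
    have hsq : √(p : ℝ) ≤ 4 * w := by
      rw [Real.sqrt_le_left (by positivity)]
      have : (p : ℝ) ≤ 16 * w ^ 2 := by exact_mod_cast hp16
      nlinarith
    have hss : √(p : ℝ) * √(p : ℝ) = p := Real.mul_self_sqrt (by positivity)
    have h0 : 0 ≤ √(p : ℝ) := Real.sqrt_nonneg _
    have h13 : 13 * (p : ℝ) ≤ 52 * w * √(p : ℝ) := by nlinarith
    have : 2 * (w : ℝ) * S.card ≤ 2 * w * (p / 2 + 6 + 26 * √(p : ℝ)) := by nlinarith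
    exact le_of_mul_le_mul_left this (by positivity)
  set χ := quadraticChar (ZMod p)
  let S1 := Finset.univ.filter fun x : ZMod p => χ (f.eval x) = 1
  let S2 := Finset.univ.filter fun x : ZMod p => χ (f.eval x) = -1
  let S0 := Finset.univ.filter fun x : ZMod p => f.eval x = 0
  have hpow : ∀ x : ZMod p, ((χ (f.eval x) : ℤ) : ZMod p) = (f.eval x) ^ ((p - 1) / 2) := by
    intro x
    have := quadraticChar_eq_pow_of_char_ne_two' hchar (f.eval x)
    rw [this, ZMod.card]
    congr 1; omega
  have h1 : (S1.card : ℝ) ≤ p / 2 + 6 + 26 * √(p : ℝ) := by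
    apply hN 1
    intro x hx
    have hx' : χ (f.eval x) = 1 := (Finset.mem_filter.1 hx).2
    rw [← hpow, hx']; simp
  have h2 : (S2.card : ℝ) ≤ p / 2 + 6 + 26 * √(p : ℝ) := by
    apply hN (-1)
    intro x hx
    have hx' : χ (f.eval x) = -1 := (Finset.mem_filter.1 hx).2
    rw [← hpow, hx']; simp
  have h0 : S0.card ≤ 6 := by
    have : S0 ⊆ f.roots.toFinset := by
      intro x hx
      rw [Multiset.mem_toFinset, mem_roots hfne]
      exact (Finset.mem_filter.1 hx).2
    exact (Finset.card_le_card this).trans ((Multiset.toFinset_card_le _).trans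
      ((card_roots' f).trans hf))
  have hpt : ∀ x : ZMod p, χ (f.eval x) =
      (if χ (f.eval x) = 1 then 1 else 0) - (if χ (f.eval x) = -1 then 1 else 0) ∧
      (1 : ℤ) = (if χ (f.eval x) = 1 then 1 else 0) + (if χ (f.eval x) = -1 then 1 else 0) +
        (if f.eval x = 0 then 1 else 0) := by
    intro x
    by_cases hx : f.eval x = 0
    · have h00 : χ 0 = 0 := quadraticChar_zero
      simp [hx, h00]
    · rcases quadraticChar_dichotomy hx with h | h <;> simp [χ, h, hx]
  have hsum : ∑ x : ZMod p, χ (f.eval x) = (S1.card : ℤ) - S2.card := by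
    rw [Finset.sum_congr rfl fun x _ => (hpt x).1, Finset.sum_sub_distrib]
    simp only [Finset.sum_boole]; rfl
  have hcard : (p : ℤ) = S1.card + S2.card + S0.card := by
    have : (p : ℤ) = ∑ x : ZMod p, (1 : ℤ) := by simp [ZMod.card]
    rw [this, Finset.sum_congr rfl fun x _ => (hpt x).2, Finset.sum_add_distrib,
      Finset.sum_add_distrib]
    simp only [Finset.sum_boole]; rfl
  rw [hsum]
  have hcard' : (p : ℝ) = S1.card + S2.card + S0.card := by exact_mod_cast hcard
  have h0' : (S0.card : ℝ) ≤ 6 := by exact_mod_cast h0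
  have hs10 : 10 ≤ √(p : ℝ) := by
    apply Real.le_sqrt_of_sq_le
    have : (100 : ℝ) < p := by exact_mod_cast hp100
    linarith
  push_cast
  rw [abs_le]
  constructor <;> linarith

/-- Weil bound for quadratic character sums of polynomials of degree at most six. -/
theorem weil {p : ℕ} [Fact p.Prime] (f : (ZMod p)[X])
    (hf : f.natDegree ≤ 6) (hns : ∀ (c : ZMod p) (h : (ZMod p)[X]), f ≠ C c * h ^ 2) :
    |((∑ x : ZMod p, quadraticChar (ZMod p) (f.eval x) : ℤ) : ℝ)| ≤ 60 * √(p : ℝ) := by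
  have hp : p.Prime := Fact.out
  by_cases hp100 : 100 < p
  · have hfne : f ≠ 0 := by
      rintro rfl
      exact hns 0 0 (by simp)
    obtain ⟨c, hc⟩ : ∃ c, f.eval c ≠ 0 := by
      by_contra! hall
      have h1 : (Finset.univ : Finset (ZMod p)) ⊆ f.roots.toFinset := by
        intro x hx
        rw [Multiset.mem_toFinset, mem_roots hfne]
        exact hall x
      have h2 := (Finset.card_le_card h1).trans ((Multiset.toFinset_card_le _).trans
        ((card_roots' f).trans hf))
      rw [Finset.card_univ, ZMod.card] at h2
      omega
    have h := weil_aux hp100 (f.comp (X + C c)) (by simpa [natDegree_comp] using hf)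
      (by simpa using hc) (by
        intro k h heq
        apply hns k (h.comp (X - C c))
        have := congrArg (fun g => g.comp (X - C c)) heq
        simpa [comp_assoc] using this)
    have hs : ∑ x : ZMod p, quadraticChar (ZMod p) (f.eval x) =
        ∑ x : ZMod p, quadraticChar (ZMod p) ((f.comp (X + C c)).eval x) := by
      simp only [eval_comp, eval_add, eval_X, eval_C]
      exact Fintype.sum_equiv (Equiv.addRight (-c)) _ _ (fun x => by simp)
    rw [hs]; exact h
  · have h1 : |∑ x : ZMod p, quadraticChar (ZMod p) (f.eval x)| ≤ p := by
      refine (Finset.abs_sum_le_sum_abs _ _).trans ?_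
      refine (Finset.sum_le_card_nsmul _ _ 1 ?_).trans ?_
      · intro x _
        by_cases hx : f.eval x = 0
        · simp [hx]
        · rcases quadraticChar_dichotomy hx with h | h <;> simp [h]
      · simp [ZMod.card]
    have h2 : |((∑ x : ZMod p, quadraticChar (ZMod p) (f.eval x) : ℤ) : ℝ)| ≤ p := by
      exact_mod_cast h1
    refine h2.trans ?_
    have h3 : (p : ℝ) ≤ 100 := by exact_mod_cast not_lt.1 hp100
    have hss : √(p : ℝ) * √(p : ℝ) = p := Real.mul_self_sqrt (by positivity)
    have h0 : 0 ≤ √(p : ℝ) := Real.sqrt_nonneg _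
    have : √(p : ℝ) ≤ 10 := by rw [Real.sqrt_le_left (by norm_num)]; linarith
    nlinarith

end Quintic

end

section

namespace Quintic

/-- The binary quintic form with coefficients `c`. -/
def qf {R : Type*} [CommRing R] (c : Fin 6 → R) (x y : R) : R :=
  c 0 * x ^ 5 + c 1 * x ^ 4 * y + c 2 * x ^ 3 * y ^ 2 + c 3 * x ^ 2 * y ^ 3 + c 4 * x * y ^ 4
    + c 5 * y ^ 5

/-- The form is not a linear form times the square of a quadratic form. -/
def NonExc (c : Fin 6 → ℤ) : Prop :=
  ¬ ∃ l m q0 q1 q2 : ℚ, ∀ x y : ℚ, qf (fun i => (c i : ℚ)) x y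
    = (l * x + m * y) * (q0 * x ^ 2 + q1 * x * y + q2 * y ^ 2) ^ 2

theorem coeffs_zero (c0 c1 c2 c3 c4 c5 : ℚ)
    (h : ∀ x y : ℚ, c0 * x ^ 5 + c1 * x ^ 4 * y + c2 * x ^ 3 * y ^ 2 + c3 * x ^ 2 * y ^ 3
      + c4 * x * y ^ 4 + c5 * y ^ 5 = 0) :
    c0 = 0 ∧ c1 = 0 ∧ c2 = 0 ∧ c3 = 0 ∧ c4 = 0 ∧ c5 = 0 := by
  have h1 := h 1 0
  have h2 := h 0 1
  have h3 := h 1 1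
  have h4 := h 1 (-1)
  have h5 := h 1 2
  have h6 := h 1 (-2)
  norm_num at h1 h2 h3 h4 h5 h6
  refine ⟨?_, ?_, ?_, ?_, ?_, ?_⟩ <;> linarith

theorem exc_norm (β γ δ μ p q : ℚ) (hδ : δ ≠ 0)
    (e1 : 2 * β = μ + 2 * p) (e2 : β ^ 2 = p ^ 2 + 2 * q + 2 * μ * p)
    (e3 : γ ^ 2 = 2 * p * q + μ * (p ^ 2 + 2 * q)) (e4 : 2 * γ * δ = q ^ 2 + 2 * μ * p * q)
    (e5 : δ ^ 2 = μ * q ^ 2) :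
    ∃ g : ℚ, g ≠ 0 ∧ β = -5 / 4 * g ^ 2 ∧ γ = 5 / 4 * g ^ 3 ∧ δ = - g ^ 5 := by
  have hq : q ≠ 0 := by
    rintro rfl
    apply hδ
    have : δ ^ 2 = 0 := by rw [e5]; ring
    exact pow_eq_zero_iff (two_ne_zero) |>.1 this
  obtain ⟨m, hm⟩ : ∃ m : ℚ, δ = m * q := ⟨δ / q, by field_simp⟩
  have hm0 : m ≠ 0 := by rintro rfl; simp at hm; exact hδ hm
  have hμ : μ = m ^ 2 := by
    have : q ^ 2 * (μ - m ^ 2) = 0 := by rw [hm] at e5; linear_combination - e5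
    rcases mul_eq_zero.1 this with h | h
    · exact absurd (pow_eq_zero_iff (two_ne_zero) |>.1 h) hq
    · linarith
  subst hμ
  have hβ : β = p + m ^ 2 / 2 := by linarith
  have hq1 : q = m ^ 4 / 8 - p * m ^ 2 / 2 := by
    rw [hβ] at e2; linear_combination (-1/2) * e2
  have hγ : 2 * γ * m = q + 2 * p * m ^ 2 := by
    have : q * (2 * γ * m - (q + 2 * p * m ^ 2)) = 0 := by
      rw [hm] at e4; linear_combination e4
    rcases mul_eq_zero.1 this with h | h
    · exact absurd h hq
    · linarith
  have hq2 : q = 4 * p * m ^ 2 + 8 * m ^ 4 := by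
    have : q * (q - (4 * p * m ^ 2 + 8 * m ^ 4)) = 0 := by
      have h2 : (2 * γ * m) ^ 2 = (q + 2 * p * m ^ 2) ^ 2 := by rw [hγ]
      linear_combination (-1) * h2 + 4 * m ^ 2 * e3
    rcases mul_eq_zero.1 this with h | h
    · exact absurd h hq
    · linarith
  have hp : p = -7 / 4 * m ^ 2 := by
    have : m ^ 2 * (p + 7 / 4 * m ^ 2) = 0 := by
      linear_combination (2/9) * hq1 - (2/9) * hq2
    rcases mul_eq_zero.1 this with h | h
    · exact absurd (pow_eq_zero_iff (two_ne_zero) |>.1 h) hm0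
    · linarith
  have hq3 : q = m ^ 4 := by rw [hq2, hp]; ring
  refine ⟨-m, neg_ne_zero.2 hm0, ?_, ?_, ?_⟩
  · rw [hβ, hp]; ring
  · have : m * (γ - 5 / 4 * (-m) ^ 3) = 0 := by
      rw [hq3, hp] at hγ; linear_combination (1/2) * hγ
    rcases mul_eq_zero.1 this with h | h
    · exact absurd h hm0
    · linarith
  · rw [hm, hq3]; ring

theorem exc_coord (α β γ δ l m q0 q1 q2 : ℚ) (hα : α ≠ 0) (hδ : δ ≠ 0)
    (h : ∀ a b : ℚ, (α * a + β * b) ^ 2 * a ^ 3 + (γ * a + δ * b) ^ 2 * b ^ 3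
      = (l * a + m * b) * (q0 * a ^ 2 + q1 * a * b + q2 * b ^ 2) ^ 2) :
    ∃ g ν : ℚ, g ≠ 0 ∧ ν ≠ 0 ∧ α = 4 * ν ∧ β = -5 * g ^ 2 * ν ∧ γ = 5 * ν * g ^ 3 ∧
      δ = -4 * ν * g ^ 5 := by
  obtain ⟨e0, e1, e2, e3, e4, e5⟩ := coeffs_zero (α ^ 2 - l * q0 ^ 2)
    (2 * α * β - (m * q0 ^ 2 + 2 * l * q0 * q1))
    (β ^ 2 - (l * (q1 ^ 2 + 2 * q0 * q2) + 2 * m * q0 * q1))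
    (γ ^ 2 - (l * (2 * q1 * q2) + m * (q1 ^ 2 + 2 * q0 * q2)))
    (2 * γ * δ - (l * q2 ^ 2 + 2 * m * q1 * q2)) (δ ^ 2 - m * q2 ^ 2)
    (fun x y => by linear_combination h x y)
  have hq0 : q0 ≠ 0 := by
    rintro rfl; apply hα
    exact pow_eq_zero_iff (two_ne_zero) |>.1 (by linarith : α ^ 2 = 0)
  have hl : l ≠ 0 := by
    rintro rfl; apply hα
    exact pow_eq_zero_iff (two_ne_zero) |>.1 (by linarith : α ^ 2 = 0)
  have hl2 : l = α ^ 2 / q0 ^ 2 := by field_simp; linarith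
  obtain ⟨g, hg, h1, h2, h3⟩ := exc_norm (β / α) (γ / α) (δ / α) (m / l) (q1 / q0) (q2 / q0)
    (div_ne_zero hδ hα)
    (by rw [hl2]; field_simp; rw [hl2] at e1; field_simp at e1; linear_combination e1)
    (by rw [hl2]; field_simp; rw [hl2] at e2; field_simp at e2; linear_combination e2)
    (by rw [hl2]; field_simp; rw [hl2] at e3; field_simp at e3; linear_combination e3)
    (by rw [hl2]; field_simp; rw [hl2] at e4; field_simp at e4; linear_combination e4)
    (by rw [hl2]; field_simp; linear_combination e5)
  refine ⟨g, α / 4, hg, by positivity, by ring, ?_, ?_, ?_⟩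
  · field_simp at h1; linear_combination h1/4
  · field_simp at h2; linear_combination h2/4
  · field_simp at h3; linear_combination h3

theorem exc_main (a1 b1 a2 b2 c1 d1 c2 d2 : ℚ) (hΔ : c1 * d2 - d1 * c2 ≠ 0)
    (h1 : a1 * d2 - b1 * c2 ≠ 0) (h2 : c1 * b2 - d1 * a2 ≠ 0)
    (h : ∃ l m q0 q1 q2 : ℚ, ∀ x y : ℚ,
      (a1 * x + b1 * y) ^ 2 * (c1 * x + d1 * y) ^ 3
        + (a2 * x + b2 * y) ^ 2 * (c2 * x + d2 * y) ^ 3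
      = (l * x + m * y) * (q0 * x ^ 2 + q1 * x * y + q2 * y ^ 2) ^ 2) :
    ∃ g ν : ℚ, g ≠ 0 ∧ ν ≠ 0 ∧
          a1 = ν * (4 * c1 - 5 * g ^ 2 * c2) ∧
          b1 = ν * (4 * d1 - 5 * g ^ 2 * d2) ∧
          a2 = ν * g ^ 3 * (5 * c1 - 4 * g ^ 2 * c2) ∧
          b2 = ν * g ^ 3 * (5 * d1 - 4 * g ^ 2 * d2) := by
  obtain ⟨l, m, q0, q1, q2, h⟩ := h
  set Δ := c1 * d2 - d1 * c2 with hΔd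
  have key : ∀ a b : ℚ, ((a1 * d2 - b1 * c2) / Δ * a + (b1 * c1 - a1 * d1) / Δ * b) ^ 2 * a ^ 3
      + ((a2 * d2 - b2 * c2) / Δ * a + (c1 * b2 - d1 * a2) / Δ * b) ^ 2 * b ^ 3
      = ((l * d2 - m * c2) / Δ * a + (m * c1 - l * d1) / Δ * b) *
        ((q0 * d2 ^ 2 - q1 * d2 * c2 + q2 * c2 ^ 2) / Δ ^ 2 * a ^ 2
          + (-2 * q0 * d1 * d2 + q1 * (d2 * c1 + d1 * c2) - 2 * q2 * c1 * c2) / Δ ^ 2 * a * b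
          + (q0 * d1 ^ 2 - q1 * d1 * c1 + q2 * c1 ^ 2) / Δ ^ 2 * b ^ 2) ^ 2 := by
    intro a b
    have := h ((d2 * a - d1 * b) / Δ) ((c1 * b - c2 * a) / Δ)
    have ha : c1 * ((d2 * a - d1 * b) / Δ) + d1 * ((c1 * b - c2 * a) / Δ) = a := by
      field_simp; rw [hΔd]; ring
    have hb : c2 * ((d2 * a - d1 * b) / Δ) + d2 * ((c1 * b - c2 * a) / Δ) = b := by
      field_simp; rw [hΔd]; ring
    rw [ha, hb] at this
    convert this using 1 <;> ring
  obtain ⟨g, ν, hg, hν, k1, k2, k3, k4⟩ := exc_coord _ _ _ _ _ _ _ _ _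
    (div_ne_zero h1 hΔ) (div_ne_zero h2 hΔ) key
  rw [div_eq_iff hΔ] at k1 k2 k3 k4
  refine ⟨g, ν, hg, hν, ?_, ?_, ?_, ?_⟩
  · apply mul_left_cancel₀ hΔ; rw [hΔd] at *; linear_combination c1 * k1 + c2 * k2
  · apply mul_left_cancel₀ hΔ; rw [hΔd] at *; linear_combination d1 * k1 + d2 * k2
  · apply mul_left_cancel₀ hΔ; rw [hΔd] at *; linear_combination c1 * k3 + c2 * k4
  · apply mul_left_cancel₀ hΔ; rw [hΔd] at *; linear_combination d1 * k3 + d2 * k4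

end Quintic

end

section

open Polynomial

namespace Quintic

theorem exists_primitive_of_rat (q : ℚ[X]) (hq : q ≠ 0) :
    ∃ q' : ℤ[X], q'.IsPrimitive ∧ Associated (q'.map (Int.castRingHom ℚ)) q := by
  have hne : IsLocalization.integerNormalization (nonZeroDivisors ℤ) q ≠ 0 := by
    rw [Ne, IsFractionRing.integerNormalization_eq_zero_iff]; exact hq
  obtain ⟨b, hb⟩ := IsLocalization.integerNormalization_map_to_map (nonZeroDivisors ℤ) q
  set r := IsLocalization.integerNormalization (nonZeroDivisors ℤ) q with hr
  refine ⟨r.primPart, r.isPrimitive_primPart, ?_⟩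
  have h1 : r.map (Int.castRingHom ℚ) = C (r.content : ℚ) * r.primPart.map (Int.castRingHom ℚ) := by
    conv_lhs => rw [r.eq_C_content_mul_primPart]
    simp
  have hb0 : ((b : ℤ) : ℚ) ≠ 0 := by
    have := nonZeroDivisors.coe_ne_zero b
    exact_mod_cast this
  have hc0 : (r.content : ℚ) ≠ 0 := by
    have : r.content ≠ 0 := by rwa [Ne, content_eq_zero_iff]
    exact_mod_cast this
  have h2 : r.map (Int.castRingHom ℚ) = C ((b : ℤ) : ℚ) * q := by
    have : (algebraMap ℤ ℚ) = Int.castRingHom ℚ := rfl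
    rw [← this, hb, Algebra.smul_def]
    simp
  have u1 : IsUnit (C (r.content : ℚ)) := isUnit_C.2 (isUnit_iff_ne_zero.2 hc0)
  have u2 : IsUnit (C ((b : ℤ) : ℚ)) := isUnit_C.2 (isUnit_iff_ne_zero.2 hb0)
  have h3 : C (r.content : ℚ) * r.primPart.map (Int.castRingHom ℚ) = C ((b : ℤ) : ℚ) * q := by
    rw [← h1, h2]
  have a1 : Associated (C (r.content : ℚ) * r.primPart.map (Int.castRingHom ℚ))
      (r.primPart.map (Int.castRingHom ℚ)) := associated_unit_mul_left _ _ u1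
  have a2 : Associated (C ((b : ℤ) : ℚ) * q) q := associated_unit_mul_left _ _ u2
  rw [h3] at a1
  exact a1.symm.trans a2

/-- Square-free decomposition over the integers. -/
theorem exists_sqfree_decomp (f : ℤ[X]) (hf : f ≠ 0) :
    ∃ h g : ℤ[X], f = h ^ 2 * g ∧ Squarefree (g.map (Int.castRingHom ℚ)) := by
  classical
  let P : ℕ → Prop := fun n => ∃ h : ℤ[X], h ^ 2 ∣ f ∧ h.natDegree = n
  have hP0 : P 0 := ⟨1, by simp, by simp⟩
  have hb : ∀ n, P n → n ≤ f.natDegree := by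
    rintro n ⟨h, ⟨g, hg⟩, rfl⟩
    have h0 : h ≠ 0 := by rintro rfl; simp at hg; exact hf hg
    have g0 : g ≠ 0 := by rintro rfl; simp at hg; exact hf hg
    rw [hg, natDegree_mul (pow_ne_zero _ h0) g0, natDegree_pow]
    omega
  obtain ⟨h, ⟨g, hg⟩, hn⟩ : P (Nat.findGreatest P f.natDegree) :=
    Nat.findGreatest_spec (Nat.zero_le _) hP0
  refine ⟨h, g, hg, ?_⟩
  have h0 : h ≠ 0 := by rintro rfl; simp at hg; exact hf hg
  have g0 : g ≠ 0 := by rintro rfl; simp at hg; exact hf hg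
  intro q hq
  by_contra hqu
  have hq0 : q ≠ 0 := by
    rintro rfl
    simp only [mul_zero, zero_dvd_iff] at hq
    exact g0 ((Polynomial.map_eq_zero_iff (RingHom.injective_int _)).1 hq)
  obtain ⟨q', hp, ha⟩ := exists_primitive_of_rat q hq0
  have hd : (q' * q').map (Int.castRingHom ℚ) ∣ g.map (Int.castRingHom ℚ) := by
    rw [Polynomial.map_mul]
    exact (ha.mul_mul ha).dvd.trans hq
  have hd2 : q' * q' ∣ g := (IsPrimitive.Int.dvd_iff_map_cast_dvd_map_cast _ _ (hp.mul hp)).2 hd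
  have hdeg : 0 < q'.natDegree := by
    have : 0 < q.natDegree := by
      rcases Nat.eq_zero_or_pos q.natDegree with h | h
      · exfalso; apply hqu
        rw [natDegree_eq_zero] at h
        obtain ⟨x, rfl⟩ := h
        exact isUnit_C.2 (isUnit_iff_ne_zero.2 (by rintro rfl; simp at hq0))
      · exact h
    have e := natDegree_eq_of_degree_eq (degree_eq_degree_of_associated ha)
    rw [natDegree_map_eq_of_injective (RingHom.injective_int _)] at e
    omega
  have hPn : P (h.natDegree + q'.natDegree) := by
    refine ⟨h * q', ?_, natDegree_mul h0 (by rintro rfl; simp at hdeg)⟩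
    rw [hg, mul_pow, pow_two q']
    exact mul_dvd_mul_left _ hd2
  have := Nat.le_findGreatest (hb _ hPn) hPn
  omega

theorem poly6_zero {R : Type*} [CommRing R] (e0 e1 e2 e3 e4 e5 e6 : R)
    (h : C e0 * X ^ 6 + C e1 * X ^ 5 + C e2 * X ^ 4 + C e3 * X ^ 3 + C e4 * X ^ 2 + C e5 * X
      + C e6 = 0) :
    e0 = 0 ∧ e1 = 0 ∧ e2 = 0 ∧ e3 = 0 ∧ e4 = 0 ∧ e5 = 0 ∧ e6 = 0 := by
  have k : ∀ n, (C e0 * X ^ 6 + C e1 * X ^ 5 + C e2 * X ^ 4 + C e3 * X ^ 3 + C e4 * X ^ 2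
      + C e5 * X + C e6).coeff n = 0 := by intro n; rw [h]; simp
  have k0 := k 0
  have k1 := k 1
  have k2 := k 2
  have k3 := k 3
  have k4 := k 4
  have k5 := k 5
  have k6 := k 6
  simp [coeff_X, coeff_C] at k0 k1 k2 k3 k4 k5 k6
  exact ⟨k6, k5, k4, k3, k2, k1, k0⟩

/-- For all nonzero linear forms, the product with the form is not a constant times a square. -/
def Good (c : Fin 6 → ℤ) (p : ℕ) : Prop :=
  ∀ a b : ZMod p, (a ≠ 0 ∨ b ≠ 0) → ∀ (k : ZMod p) (h : (ZMod p)[X]),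
    qf (fun i => C (c i : ZMod p)) X 1 * (C a * X + C b) ≠ C k * h ^ 2

/-- homogeneous version -/
def GoodH (c : Fin 6 → ℤ) (p : ℕ) : Prop :=
  ∀ a b : ZMod p, (a ≠ 0 ∨ b ≠ 0) → ∀ (k h0 h1 h2 h3 : ZMod p),
    ¬ ∀ x y : (ZMod p)[X], qf (fun i => C (c i : ZMod p)) x y * (C a * x + C b * y)
      = C k * (C h0 * x ^ 3 + C h1 * x ^ 2 * y + C h2 * x * y ^ 2 + C h3 * y ^ 3) ^ 2

theorem natDegree_lin_quint {R : Type*} [CommRing R] (c : Fin 6 → R) (a b : R) :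
    (qf (fun i => C (c i)) X 1 * (C a * X + C b)).natDegree ≤ 6 := by
  unfold qf
  simp only [one_pow, mul_one]
  compute_degree!

theorem good_of_goodH {p : ℕ} [Fact p.Prime] {c : Fin 6 → ℤ} (h : GoodH c p) : Good c p := by
  intro a b hab k s hs
  by_cases hk : k * s.leadingCoeff ^ 2 = 0
  · have : C k * s ^ 2 = 0 := by
      rcases mul_eq_zero.1 hk with h | h
      · simp [h]
      · simp only [ne_eq, OfNat.ofNat_ne_zero, not_false_eq_true, pow_eq_zero_iff,
          leadingCoeff_eq_zero] at h
        simp [h]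
    rw [this] at hs
    refine h a b hab 0 0 0 0 0 fun x y => ?_
    have e := poly6_zero (c 0 * a : ZMod p) (c 1 * a + c 0 * b) (c 2 * a + c 1 * b)
      (c 3 * a + c 2 * b) (c 4 * a + c 3 * b) (c 5 * a + c 4 * b) (c 5 * b) (by
        rw [← hs]; simp only [qf, C_add, C_mul]; ring)
    obtain ⟨e0, e1, e2, e3, e4, e5, e6⟩ := e
    apply_fun C at e0 e1 e2 e3 e4 e5 e6
    simp only [C_add, C_mul, C_0] at e0 e1 e2 e3 e4 e5 e6
    simp only [qf, C_0]
    linear_combination x ^ 6 * e0 + x ^ 5 * y * e1 + x ^ 4 * y ^ 2 * e2 + x ^ 3 * y ^ 3 * e3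
      + x ^ 2 * y ^ 4 * e4 + x * y ^ 5 * e5 + y ^ 6 * e6
  · have hd : (C k * s ^ 2).natDegree = 2 * s.natDegree := by
      have hk0 : k ≠ 0 := by rintro rfl; simp at hk
      rw [natDegree_C_mul hk0, natDegree_pow]
    have hd3 : s.natDegree ≤ 3 := by
      have := natDegree_lin_quint (fun i => (c i : ZMod p)) a b
      rw [hs, hd] at this
      omega
    have hse : s = C (s.coeff 3) * X ^ 3 + C (s.coeff 2) * X ^ 2 + C (s.coeff 1) * X
        + C (s.coeff 0) := by
      conv_lhs => rw [s.as_sum_range_C_mul_X_pow' (show s.natDegree < 4 by omega)]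
      simp [Finset.sum_range_succ]; ring
    generalize s.coeff 3 = h0 at hse
    generalize s.coeff 2 = h1 at hse
    generalize s.coeff 1 = h2 at hse
    generalize s.coeff 0 = h3 at hse
    refine h a b hab k h0 h1 h2 h3 fun x y => ?_
    have e := poly6_zero (c 0 * a - k * h0 ^ 2 : ZMod p) (c 1 * a + c 0 * b - k * (2 * h0 * h1))
      (c 2 * a + c 1 * b - k * (h1 ^ 2 + 2 * h0 * h2))
      (c 3 * a + c 2 * b - k * (2 * h0 * h3 + 2 * h1 * h2))
      (c 4 * a + c 3 * b - k * (h2 ^ 2 + 2 * h1 * h3))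
      (c 5 * a + c 4 * b - k * (2 * h2 * h3)) (c 5 * b - k * h3 ^ 2) (by
        rw [hse] at hs
        simp only [qf, C_add, C_mul, C_sub, C_pow, map_ofNat] at hs ⊢
        linear_combination hs)
    obtain ⟨e0, e1, e2, e3, e4, e5, e6⟩ := e
    apply_fun C at e0 e1 e2 e3 e4 e5 e6
    simp only [C_add, C_mul, C_0, C_sub, C_pow, map_ofNat] at e0 e1 e2 e3 e4 e5 e6
    simp only [qf]
    linear_combination x ^ 6 * e0 + x ^ 5 * y * e1 + x ^ 4 * y ^ 2 * e2 + x ^ 3 * y ^ 3 * e3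
      + x ^ 2 * y ^ 4 * e4 + x * y ^ 5 * e5 + y ^ 6 * e6

theorem goodH_of_good {p : ℕ} {c : Fin 6 → ℤ} (h : Good c p) : GoodH c p := by
  intro a b hab k h0 h1 h2 h3 hh
  refine h a b hab k (C h0 * X ^ 3 + C h1 * X ^ 2 + C h2 * X + C h3) ?_
  have := hh X 1
  simpa using this

/-- The form after the substitution `y ↦ y + k x`. -/
def shiftc (c : Fin 6 → ℤ) (k : ℤ) : Fin 6 → ℤ :=
  ![c 0 + c 1 * k + c 2 * k ^ 2 + c 3 * k ^ 3 + c 4 * k ^ 4 + c 5 * k ^ 5,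
    c 1 + 2 * c 2 * k + 3 * c 3 * k ^ 2 + 4 * c 4 * k ^ 3 + 5 * c 5 * k ^ 4,
    c 2 + 3 * c 3 * k + 6 * c 4 * k ^ 2 + 10 * c 5 * k ^ 3,
    c 3 + 4 * c 4 * k + 10 * c 5 * k ^ 2,
    c 4 + 5 * c 5 * k,
    c 5]

theorem qf_shift {R : Type*} [CommRing R] (c : Fin 6 → ℤ) (k : ℤ) (x y : R) :
    qf (fun i => (shiftc c k i : R)) x y = qf (fun i => (c i : R)) x (y + k * x) := by
  simp [qf, shiftc]
  ring

theorem nonExc_shift {c : Fin 6 → ℤ} (h : NonExc c) (k : ℤ) : NonExc (shiftc c k) := by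
  rintro ⟨l, m, q0, q1, q2, hh⟩
  apply h
  refine ⟨l - m * k, m, q0 - q1 * k + q2 * k ^ 2, q1 - 2 * q2 * k, q2, fun x y => ?_⟩
  have := hh x (y - k * x)
  rw [qf_shift] at this
  rw [sub_add_cancel] at this
  rw [this]; ring

theorem goodH_shift {p : ℕ} {c : Fin 6 → ℤ} {k : ℤ} (h : GoodH (shiftc c k) p) : GoodH c p := by
  intro a b hab κ h0 h1 h2 h3 hh
  refine h (a + b * k) b ?_ κ (h0 + h1 * k + h2 * k ^ 2 + h3 * k ^ 3)
    (h1 + 2 * h2 * k + 3 * h3 * k ^ 2) (h2 + 3 * h3 * k) h3 fun x y => ?_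
  · by_cases hb : b = 0
    · subst hb; simpa using hab
    · exact Or.inr hb
  · have e := hh x (y + k * x)
    have e1 : ∀ d : Fin 6 → ℤ, (fun i => (C (d i : ZMod p) : (ZMod p)[X])) =
        fun i => ((d i : ℤ) : (ZMod p)[X]) := by intro d; ext1 i; simp
    rw [e1] at e ⊢
    rw [qf_shift]
    simp only [C_add, C_mul, C_pow, map_intCast, map_ofNat]
    linear_combination e

end Quintic

end

section

open Polynomial

namespace Quintic

theorem good_of_decomp {p : ℕ} [Fact p.Prime] (f h g : (ZMod p)[X]) (hf0 : f ≠ 0)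
    (hfg : f = h ^ 2 * g)
    (hg : Squarefree g) (hdeg : 3 ≤ g.natDegree) (a b : ZMod p) (hab : a ≠ 0 ∨ b ≠ 0)
    (k : ZMod p) (s : (ZMod p)[X]) : f * (C a * X + C b) ≠ C k * s ^ 2 := by
  intro e
  have hl : C a * X + C b ≠ 0 := by
    intro h0
    have h1 := congrArg (fun q => coeff q 0) h0
    have h2 := congrArg (fun q => coeff q 1) h0
    simp [coeff_C] at h1 h2
    rcases hab with h | h
    · exact h h2
    · exact h h1
  have hk : k ≠ 0 := by
    rintro rfl
    simp at e
    rcases e with e | e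
    · exact hf0 e
    · exact hl e
  have hh : h ≠ 0 := by rintro rfl; simp at hfg; exact hf0 hfg
  have hg0 : g ≠ 0 := by rintro rfl; simp at hfg; exact hf0 hfg
  have hu : IsUnit (C k) := isUnit_C.2 (isUnit_iff_ne_zero.2 hk)
  have d1 : h ^ 2 ∣ s ^ 2 := by
    rw [← hu.dvd_mul_left, ← e, hfg]
    exact ⟨g * (C a * X + C b), by ring⟩
  have d2 : h ∣ s := (UniqueFactorizationMonoid.pow_dvd_pow_iff_dvd two_ne_zero).1 d1
  obtain ⟨t, rfl⟩ := d2
  have e2 : g * (C a * X + C b) = C k * t ^ 2 := by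
    apply mul_left_cancel₀ (pow_ne_zero 2 hh)
    rw [hfg] at e
    linear_combination e
  have d3 : g ∣ t ^ 2 := by
    rw [← hu.dvd_mul_left, ← e2]; exact Dvd.intro _ rfl
  have d4 : g ∣ t := (hg.dvd_pow_iff_dvd two_ne_zero).1 d3
  obtain ⟨r, rfl⟩ := d4
  have d5 : g ∣ C a * X + C b := by
    refine ⟨C k * r ^ 2, ?_⟩
    apply mul_left_cancel₀ hg0
    rw [e2]; ring
  have := natDegree_le_of_dvd d5 hl
  have h1 : (C a * X + C b).natDegree ≤ 1 := natDegree_linear_le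
  omega

theorem natAbs_resultant_le (g : ℤ[X]) (hn : g.natDegree ≤ 5) (B : ℕ) (hB1 : 1 ≤ B)
    (hB : ∀ i, |g.coeff i| ≤ B) :
    |g.resultant g.derivative| ≤ (10 : ℕ).factorial * (5 * B) ^ 10 := by
  have hd : g.derivative.natDegree ≤ 5 := (natDegree_derivative_le g).trans (by omega)
  have hdc : ∀ i, |g.derivative.coeff i| ≤ 5 * B := by
    intro i
    rw [coeff_derivative]
    rcases le_or_gt (i + 1) 5 with hi | hi
    · rw [abs_mul]
      have h1 := hB (i + 1)
      have h2 : |((i : ℤ) + 1)| ≤ 5 := by rw [abs_of_nonneg (by positivity)]; exact_mod_cast hi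
      have := abs_nonneg (g.coeff (i+1))
      have hB' : (0:ℤ) ≤ B := by positivity
      nlinarith
    · rw [coeff_eq_zero_of_natDegree_lt (by omega)]; simp
  have hx : ∀ i j, AbsoluteValue.abs (sylvester g g.derivative g.natDegree g.derivative.natDegree i j)
      ≤ 5 * (B : ℤ) := by
    intro i j
    rw [AbsoluteValue.abs_apply]
    unfold sylvester
    rw [Matrix.of_apply]
    have hB0 : (0:ℤ) ≤ 5 * B := by positivity
    refine Fin.addCases (fun j => ?_) (fun j => ?_) j
    · rw [Fin.addCases_left]
      split_ifs
      · exact hdc _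
      · simpa using hB0
    · rw [Fin.addCases_right]
      split_ifs
      · exact (hB _).trans (by linarith)
      · simpa using hB0
  have := Matrix.det_le hx
  rw [AbsoluteValue.abs_apply, Fintype.card_fin, nsmul_eq_mul] at this
  refine this.trans ?_
  gcongr
  · omega
  · have : (1 : ℤ) ≤ B := by exact_mod_cast hB1
    linarith
  · omega

theorem factor_coeff_le (f h g : ℤ[X]) (hf0 : f ≠ 0) (hfg : f = h ^ 2 * g)
    (hdeg : f.natDegree ≤ 5) (H : ℕ) (hH : ∀ i, |f.coeff i| ≤ H) (i : ℕ) :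
    |g.coeff i| ≤ (192 * H : ℕ) := by
  have hh : h ≠ 0 := by rintro rfl; simp at hfg; exact hf0 hfg
  have hg0 : g ≠ 0 := by rintro rfl; simp at hfg; exact hf0 hfg
  have hgd : g.natDegree ≤ 5 := by
    have := natDegree_mul (pow_ne_zero 2 hh) hg0
    rw [← hfg] at this; omega
  have hM : 1 ≤ ((h ^ 2).map (Int.castRingHom ℂ)).mahlerMeasure :=
    one_le_mahlerMeasure_of_ne_zero (pow_ne_zero 2 hh)
  have h1 := norm_coeff_le_choose_mul_mahlerMeasure_of_one_le_mahlerMeasure i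
    (g.map (Int.castRingHom ℂ)) ((h ^ 2).map (Int.castRingHom ℂ)) hM
  rw [← Polynomial.map_mul, mul_comm g, ← hfg,
    natDegree_map_eq_of_injective (RingHom.injective_int _)] at h1
  have h2 : (f.map (Int.castRingHom ℂ)).mahlerMeasure ≤ 6 * H := by
    refine (mahlerMeasure_le_sum_norm_coeff _).trans ?_
    rw [sum_over_range' _ (by simp) 6 (by
      rw [natDegree_map_eq_of_injective (RingHom.injective_int _)]; omega)]
    refine (Finset.sum_le_card_nsmul _ _ (H : ℝ) ?_).trans (by simp)
    intro j _
    rw [coeff_map]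
    simp only [eq_intCast, Complex.norm_intCast]
    exact_mod_cast hH j
  have h3 : (g.natDegree.choose i : ℝ) ≤ 32 := by
    have : g.natDegree.choose i ≤ 2 ^ g.natDegree := Nat.choose_le_two_pow _ _
    have h4 : 2 ^ g.natDegree ≤ 2 ^ 5 := Nat.pow_le_pow_right (by norm_num) hgd
    exact_mod_cast this.trans h4
  have h5 : ‖(g.map (Int.castRingHom ℂ)).coeff i‖ = |(g.coeff i : ℝ)| := by
    rw [coeff_map]; simp
  rw [h5] at h1
  have h6 : |(g.coeff i : ℝ)| ≤ 32 * (6 * H) :=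
    h1.trans (mul_le_mul h3 h2 (mahlerMeasure_nonneg _) (by norm_num))
  have h7 : ((|g.coeff i| : ℤ) : ℝ) ≤ ((192 * H : ℕ) : ℝ) := by push_cast; linarith
  exact_mod_cast h7

end Quintic

end

section

open Polynomial

namespace Quintic

theorem qpoly_coeff {R : Type*} [CommRing R] (c : Fin 6 → R) :
    (∀ i : Fin 6, (qf (fun i => C (c i)) X 1 : R[X]).coeff (5 - i) = c i) ∧
    (qf (fun i => C (c i)) X 1 : R[X]).natDegree ≤ 5 := by
  constructor
  · intro i
    unfold qf
    simp only [one_pow, mul_one]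
    fin_cases i <;> simp [coeff_X, coeff_C]
  · unfold qf
    simp only [one_pow, mul_one]
    compute_degree!

theorem qpoly_coeff_le (c : Fin 6 → ℤ) (H : ℕ) (hH : ∀ i, |c i| ≤ H) (i : ℕ) :
    |(qf (fun i => C (c i)) X 1 : ℤ[X]).coeff i| ≤ H := by
  obtain ⟨h1, h2⟩ := qpoly_coeff c
  rcases le_or_gt i 5 with hi | hi
  · have := h1 ⟨5 - i, by omega⟩
    have e : 5 - (5 - i) = i := by omega
    simp only [e] at this
    rw [this]; exact hH _
  · rw [coeff_eq_zero_of_natDegree_lt (by omega)]; simp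

theorem qpoly_map {R S : Type*} [CommRing R] [CommRing S] (φ : R →+* S) (c : Fin 6 → R) :
    (qf (fun i => C (c i)) X 1 : R[X]).map φ = qf (fun i => C (φ (c i))) X 1 := by
  simp [qf]

theorem nonExc_poly {c : Fin 6 → ℤ} (hc : NonExc c) (h g : ℤ[X])
    (hfg : (qf (fun i => C (c i)) X 1 : ℤ[X]) = h ^ 2 * g) (hh : h.natDegree ≤ 2)
    (hg : g.natDegree ≤ 1) : False := by
  apply hc
  have hhe : h = C (h.coeff 2) * X ^ 2 + C (h.coeff 1) * X + C (h.coeff 0) := by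
    conv_lhs => rw [h.as_sum_range_C_mul_X_pow' (show h.natDegree < 3 by omega)]
    simp [Finset.sum_range_succ]; ring
  have hge : g = C (g.coeff 1) * X + C (g.coeff 0) := by
    conv_lhs => rw [g.as_sum_range_C_mul_X_pow' (show g.natDegree < 2 by omega)]
    simp [Finset.sum_range_succ]; ring
  generalize h.coeff 2 = q0 at hhe
  generalize h.coeff 1 = q1 at hhe
  generalize h.coeff 0 = q2 at hhe
  generalize g.coeff 1 = l at hge
  generalize g.coeff 0 = m at hge
  obtain ⟨-, e0, e1, e2, e3, e4, e5⟩ := poly6_zero 0 (c 0 - l * q0 ^ 2)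
    (c 1 - (m * q0 ^ 2 + 2 * l * q0 * q1))
    (c 2 - (l * (q1 ^ 2 + 2 * q0 * q2) + 2 * m * q0 * q1))
    (c 3 - (l * (2 * q1 * q2) + m * (q1 ^ 2 + 2 * q0 * q2)))
    (c 4 - (l * q2 ^ 2 + 2 * m * q1 * q2)) (c 5 - m * q2 ^ 2) (by
      rw [hhe, hge] at hfg
      simp only [qf, C_add, C_mul, C_sub, C_pow, map_ofNat, C_0] at hfg ⊢
      linear_combination hfg)
  refine ⟨l, m, q0, q1, q2, fun x y => ?_⟩
  apply_fun (Int.cast : ℤ → ℚ) at e0 e1 e2 e3 e4 e5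
  push_cast at e0 e1 e2 e3 e4 e5
  simp only [qf]
  linear_combination x ^ 5 * e0 + x ^ 4 * y * e1 + x ^ 3 * y ^ 2 * e2 + x ^ 2 * y ^ 3 * e3
      + x * y ^ 4 * e4 + y ^ 5 * e5

theorem good_primes_aux {c : Fin 6 → ℤ} (hc : NonExc c) (hc0 : c 0 ≠ 0) (H : ℕ) (hH1 : 1 ≤ H)
    (hH : ∀ i, |c i| ≤ H) :
    ∃ D : ℕ, D ≠ 0 ∧ D ≤ H * ((10 : ℕ).factorial * (5 * (192 * H)) ^ 10) ∧
      ∀ p : ℕ, p.Prime → ¬ p ∣ D → Good c p := by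
  set f : ℤ[X] := qf (fun i => C (c i)) X 1 with hf
  obtain ⟨hcf, hd5⟩ := qpoly_coeff c
  rw [← hf] at hd5
  have hf5 : f.coeff 5 = c 0 := hcf 0
  have hf0 : f ≠ 0 := by intro h; rw [h] at hf5; simp at hf5; exact hc0 hf5.symm
  have hfd : f.natDegree = 5 := le_antisymm hd5 (le_natDegree_of_ne_zero (by rwa [hf5]))
  obtain ⟨h, g, hfg, hsq⟩ := exists_sqfree_decomp f hf0
  have hh : h ≠ 0 := by rintro rfl; simp at hfg; exact hf0 hfg
  have hg0 : g ≠ 0 := by rintro rfl; simp at hfg; exact hf0 hfg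
  have hdeg : 2 * h.natDegree + g.natDegree = 5 := by
    have := natDegree_mul (pow_ne_zero 2 hh) hg0
    rw [← hfg, natDegree_pow] at this; omega
  have hg3 : 3 ≤ g.natDegree := by
    by_contra hlt
    exact nonExc_poly hc h g hfg (by omega) (by omega)
  have hres : g.resultant g.derivative ≠ 0 := by
    have hs := PerfectField.separable_iff_squarefree.2 hsq
    intro h0
    have h1 : (g.map (Int.castRingHom ℚ)).resultant (g.map (Int.castRingHom ℚ)).derivative = 0 := by
      rw [derivative_map, natDegree_map_eq_of_injective (RingHom.injective_int _),
        natDegree_map_eq_of_injective (RingHom.injective_int _), resultant_map_map, h0]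
      simp
    rw [resultant_eq_zero_iff] at h1
    exact h1.2 hs
  have hgc := factor_coeff_le f h g hf0 hfg hd5 H (qpoly_coeff_le c H hH)
  have hrb := natAbs_resultant_le g (by omega) (192 * H) (by omega) hgc
  refine ⟨(c 0).natAbs * (g.resultant g.derivative).natAbs,
    mul_ne_zero (by simpa using hc0) (by simpa using hres), ?_, ?_⟩
  · apply Nat.mul_le_mul
    · have := hH 0
      rw [Int.abs_eq_natAbs] at this; exact_mod_cast this
    · have : ((g.resultant g.derivative).natAbs : ℤ) ≤
        (((10 : ℕ).factorial * (5 * (192 * H)) ^ 10 : ℕ) : ℤ) := by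
        rw [Int.natCast_natAbs]; push_cast at hrb ⊢; exact hrb
      exact_mod_cast this
  · intro p hp hpD
    haveI : Fact p.Prime := ⟨hp⟩
    have hpc0 : ((c 0 : ℤ) : ZMod p) ≠ 0 := by
      rw [Ne, ZMod.intCast_zmod_eq_zero_iff_dvd]
      intro hd
      exact hpD (Dvd.dvd.mul_right (Int.natCast_dvd.1 hd) _)
    have hpr : ((g.resultant g.derivative : ℤ) : ZMod p) ≠ 0 := by
      rw [Ne, ZMod.intCast_zmod_eq_zero_iff_dvd]
      intro hd
      exact hpD (Dvd.dvd.mul_left (Int.natCast_dvd.1 hd) _)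
    intro a b hab k s
    set φ := Int.castRingHom (ZMod p) with hφ
    have hmap := qpoly_map φ c
    rw [← hf] at hmap
    have e : (fun i => C ((c i : ℤ) : ZMod p)) = fun i => C (φ (c i)) := by ext1 i; simp [hφ]
    rw [e, ← hmap]
    have hlc : f.leadingCoeff = c 0 := by rw [leadingCoeff, hfd, hf5]
    have hmd : g.leadingCoeff ∣ c 0 := by
      rw [← hlc, hfg, leadingCoeff_mul]; exact Dvd.intro_left _ rfl
    refine good_of_decomp (f.map φ) (h.map φ) (g.map φ) ?_ ?_ ?_ ?_ a b hab k s
    · intro h0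
      have := congrArg (fun q => coeff q 5) h0
      simp [coeff_map, hf5, hφ] at this
      exact hpc0 this
    · rw [hfg]; simp
    · apply Separable.squarefree
      obtain ⟨u, v, -, -, huv⟩ := exists_mul_add_mul_eq_C_resultant g g.derivative le_rfl le_rfl
        (Or.inl (by omega))
      have huv2 := congrArg (Polynomial.map φ) huv
      rw [Polynomial.map_add, Polynomial.map_mul, Polynomial.map_mul, map_C] at huv2
      set r := φ (g.resultant g.derivative) with hr
      have hr0 : r ≠ 0 := hpr
      refine ⟨C r⁻¹ * u.map φ, C r⁻¹ * v.map φ, ?_⟩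
      rw [derivative_map]
      have : C r⁻¹ * C r = 1 := by rw [← C_mul, inv_mul_cancel₀ hr0, C_1]
      linear_combination C r⁻¹ * huv2 + this
    · have : (g.map φ).natDegree = g.natDegree := by
        apply natDegree_map_of_leadingCoeff_ne_zero
        intro h0
        apply hpc0
        obtain ⟨t, ht⟩ := hmd
        have : φ (c 0) = 0 := by rw [ht, map_mul, h0, zero_mul]
        simpa [hφ] using this
      omega

theorem good_primes {c : Fin 6 → ℤ} (hc : NonExc c) (H : ℕ) (hH1 : 1 ≤ H)
    (hH : ∀ i, |c i| ≤ H) :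
    ∃ D : ℕ, D ≠ 0 ∧ D ≤ (2 * H) ^ 600 ∧ ∀ p : ℕ, p.Prime → ¬ p ∣ D → Good c p := by
  obtain ⟨k, hk, hk0⟩ : ∃ k : ℕ, k ≤ 5 ∧ shiftc c k 0 ≠ 0 := by
    by_contra! hcon
    have h0 := hcon 0 (by norm_num)
    have h1 := hcon 1 (by norm_num)
    have h2 := hcon 2 (by norm_num)
    have h3 := hcon 3 (by norm_num)
    have h4 := hcon 4 (by norm_num)
    have h5 := hcon 5 (by norm_num)
    simp [shiftc] at h0 h1 h2 h3 h4 h5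
    have e0 : c 0 = 0 := by linarith
    have e1 : c 1 = 0 := by linarith
    have e2 : c 2 = 0 := by linarith
    have e3 : c 3 = 0 := by linarith
    have e4 : c 4 = 0 := by linarith
    have e5 : c 5 = 0 := by linarith
    apply hc
    refine ⟨0, 0, 0, 0, 0, fun x y => ?_⟩
    simp [qf, e0, e1, e2, e3, e4, e5]
  have hH' : ∀ i, |shiftc c k i| ≤ (2 ^ 14 * H : ℕ) := by
    have b0 := abs_le.1 (hH 0)
    have b1 := abs_le.1 (hH 1)
    have b2 := abs_le.1 (hH 2)
    have b3 := abs_le.1 (hH 3)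
    have b4 := abs_le.1 (hH 4)
    have b5 := abs_le.1 (hH 5)
    intro i
    push_cast
    rw [abs_le]
    interval_cases k <;> fin_cases i <;> simp [shiftc] <;> constructor <;> linarith
  obtain ⟨D, hD0, hDle, hD⟩ := good_primes_aux (nonExc_shift hc k) hk0 (2 ^ 14 * H)
    (by omega) hH'
  refine ⟨D, hD0, hDle.trans ?_, fun p hp hpD => ?_⟩
  · have h10 : (10 : ℕ).factorial ≤ 2 ^ 22 := by decide
    have h11 : 5 * (192 * (2 ^ 14 * H)) ≤ 2 ^ 24 * H := by omega
    calc 2 ^ 14 * H * ((10 : ℕ).factorial * (5 * (192 * (2 ^ 14 * H))) ^ 10)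
        ≤ 2 ^ 14 * H * (2 ^ 22 * (2 ^ 24 * H) ^ 10) :=
          Nat.mul_le_mul le_rfl (Nat.mul_le_mul h10 (Nat.pow_le_pow_left h11 _))
      _ = (2 ^ 14 * (2 ^ 22 * (2 ^ 24) ^ 10)) * H ^ 11 := by rw [mul_pow]; ring
      _ = 2 ^ 276 * H ^ 11 := by
          rw [← pow_mul, ← pow_add, ← pow_add]
      _ ≤ 2 ^ 600 * H ^ 600 :=
          Nat.mul_le_mul (Nat.pow_le_pow_right (by norm_num) (by norm_num))
            (Nat.pow_le_pow_right hH1 (by norm_num))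
      _ = (2 * H) ^ 600 := by rw [mul_pow]
  · haveI : Fact p.Prime := ⟨hp⟩
    exact good_of_goodH (goodH_shift (goodH_of_good (hD p hp hpD)))

end Quintic

end

section

namespace Quintic

open Finset

theorem char_W {G ι : Type*} [AddCommGroup G] [Fintype G] (B : Finset ι) (r : ι → G)
    (χ : AddChar G ℂ) :
    ((‖∑ h ∈ B, χ (r h)‖ ^ 2 : ℝ) : ℂ) = ∑ h ∈ B, ∑ h' ∈ B, χ (r h' - r h) := by
  have e : ((‖∑ h ∈ B, χ (r h)‖ ^ 2 : ℝ) : ℂ)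
      = (starRingEnd ℂ) (∑ h ∈ B, χ (r h)) * ∑ h ∈ B, χ (r h) := by
    rw [← Complex.normSq_eq_conj_mul_self, Complex.normSq_eq_norm_sq]
  rw [e, map_sum, Finset.sum_mul_sum]
  refine Finset.sum_congr rfl fun h _ => Finset.sum_congr rfl fun h' _ => ?_
  rw [sub_eq_add_neg, AddChar.map_add_eq_mul, mul_comm, AddChar.map_neg_eq_conj]

theorem fourier_bound {G ι : Type*} [AddCommGroup G] [Fintype G] [DecidableEq G]
    (ψ : G → ℂ) (M : ℝ)
    (hM : ∀ χ : AddChar G ℂ, ‖∑ g, ψ g * χ g‖ ≤ M) (B : Finset ι) (r : ι → G) :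
    ‖∑ h ∈ B, ∑ h' ∈ B, ψ (r h - r h')‖ ≤
      M * (((B ×ˢ B).filter fun x => r x.1 = r x.2).card : ℝ) := by
  classical
  have hcard : (0 : ℝ) < Fintype.card G := by
    exact_mod_cast Fintype.card_pos
  have key : (Fintype.card G : ℂ) * ∑ h ∈ B, ∑ h' ∈ B, ψ (r h - r h')
      = ∑ χ : AddChar G ℂ, (∑ g, ψ g * χ g) * ((‖∑ h ∈ B, χ (r h)‖ ^ 2 : ℝ) : ℂ) := by
    have inv : ∀ z, (Fintype.card G : ℂ) * ψ z = ∑ χ : AddChar G ℂ, (∑ g, ψ g * χ g) * χ (-z) := by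
      intro z
      simp_rw [Finset.sum_mul]
      rw [Finset.sum_comm]
      have : ∀ g, ∑ χ : AddChar G ℂ, ψ g * χ g * χ (-z)
          = ψ g * (if g - z = 0 then (Fintype.card G : ℂ) else 0) := by
        intro g
        rw [← AddChar.sum_apply_eq_ite, Finset.mul_sum]
        refine Finset.sum_congr rfl fun χ _ => ?_
        rw [sub_eq_add_neg, AddChar.map_add_eq_mul, mul_assoc]
      simp_rw [this, sub_eq_zero]
      simp [mul_comm]
    simp_rw [char_W, Finset.mul_sum, inv]
    simp_rw [neg_sub]
    rw [Finset.sum_comm]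
    refine (Finset.sum_congr rfl fun h' _ => Finset.sum_comm).trans ?_
    rw [Finset.sum_comm]
    refine Finset.sum_congr rfl fun χ _ => ?_
    rw [Finset.sum_comm]
  have sumW : ∑ χ : AddChar G ℂ, (‖∑ h ∈ B, χ (r h)‖ ^ 2 : ℝ)
      = Fintype.card G * (((B ×ˢ B).filter fun x => r x.1 = r x.2).card : ℝ) := by
    have : ((∑ χ : AddChar G ℂ, (‖∑ h ∈ B, χ (r h)‖ ^ 2 : ℝ) : ℝ) : ℂ)
      = ((Fintype.card G * (((B ×ˢ B).filter fun x => r x.1 = r x.2).card : ℝ) : ℝ) : ℂ) := by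
      rw [Complex.ofReal_sum]
      simp_rw [char_W]
      rw [Finset.sum_comm]
      refine (Finset.sum_congr rfl fun h' _ => Finset.sum_comm).trans ?_
      simp_rw [AddChar.sum_apply_eq_ite, sub_eq_zero]
      rw [Finset.card_filter, Finset.sum_product]
      push_cast
      rw [Finset.mul_sum]
      refine Finset.sum_congr rfl fun h _ => ?_
      rw [Finset.mul_sum]
      refine Finset.sum_congr rfl fun h' _ => ?_
      by_cases hh : r h = r h'
      · simp [hh]
      · simp [hh, Ne.symm hh]
    exact_mod_cast this
  have h1 : (Fintype.card G : ℝ) * ‖∑ h ∈ B, ∑ h' ∈ B, ψ (r h - r h')‖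
      ≤ M * (Fintype.card G * (((B ×ˢ B).filter fun x => r x.1 = r x.2).card : ℝ)) := by
    rw [← sumW, Finset.mul_sum]
    have : (Fintype.card G : ℝ) * ‖∑ h ∈ B, ∑ h' ∈ B, ψ (r h - r h')‖
        = ‖(Fintype.card G : ℂ) * ∑ h ∈ B, ∑ h' ∈ B, ψ (r h - r h')‖ := by
      rw [norm_mul]; simp
    rw [this, key]
    refine (norm_sum_le _ _).trans (Finset.sum_le_sum fun χ _ => ?_)
    rw [norm_mul, Complex.norm_real, Real.norm_of_nonneg (by positivity)]
    exact mul_le_mul_of_nonneg_right (hM χ) (by positivity)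
  nlinarith

/-- complex-valued quadratic character -/
noncomputable def qc (p : ℕ) [Fact p.Prime] : MulChar (ZMod p) ℂ :=
  (quadraticChar (ZMod p)).ringHomComp (Int.castRingHom ℂ)

theorem qc_apply (p : ℕ) [Fact p.Prime] (x : ZMod p) :
    qc p x = ((quadraticChar (ZMod p) x : ℤ) : ℂ) := rfl

theorem qc_zero (p : ℕ) [Fact p.Prime] : qc p 0 = 0 := MulChar.map_zero _

theorem qc_norm_le (p : ℕ) [Fact p.Prime] (x : ZMod p) : ‖qc p x‖ ≤ 1 := by
  rw [qc_apply]
  rcases (quadraticChar_isQuadratic (ZMod p)) x with h | h | h <;> rw [h] <;> simp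

theorem qc_ne_one {p : ℕ} [Fact p.Prime] (hp2 : p ≠ 2) : qc p ≠ 1 := by
  apply (MulChar.ringHomComp_ne_one_iff (RingHom.injective_int _)).2
  apply quadraticChar_ne_one
  rwa [ZMod.ringChar_zmod_n]

theorem qc_quad (p : ℕ) [Fact p.Prime] : (qc p).IsQuadratic :=
  (quadraticChar_isQuadratic (ZMod p)).comp _

theorem gauss_norm {p : ℕ} [Fact p.Prime] (hp2 : p ≠ 2) :
    ‖gaussSum (qc p) (ZMod.stdAddChar (N := p))‖ = √(p : ℝ) := by
  have h : gaussSum (qc p) (ZMod.stdAddChar (N := p)) ^ 2 = qc p (-1) * Fintype.card (ZMod p) :=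
    gaussSum_sq (qc_ne_one hp2) (qc_quad p) (ZMod.isPrimitive_stdAddChar p)
  have h2 := congrArg (fun z => ‖z‖) h
  simp only [norm_pow, norm_mul, ZMod.card] at h2
  have h3 : ‖qc p (-1)‖ = 1 := by
    rcases qc_quad p (-1) with h | h | h
    · exfalso
      have h4 : qc p ((-1) * (-1)) = 0 := by rw [map_mul, h]; simp
      simp at h4
    · rw [h]; simp
    · rw [h]; simp
  rw [h3, one_mul] at h2
  simp at h2
  rw [← h2]
  exact (Real.sqrt_sq (norm_nonneg _)).symm

theorem gauss_shift {p : ℕ} [Fact p.Prime] (hp2 : p ≠ 2) (a : ZMod p) :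
    ∑ y : ZMod p, qc p y * ZMod.stdAddChar (a * y) =
      qc p a * gaussSum (qc p) (ZMod.stdAddChar (N := p)) := by
  by_cases ha : a = 0
  · subst ha
    simp only [zero_mul, AddChar.map_zero_eq_one, mul_one, MulChar.map_zero]
    exact MulChar.sum_eq_zero_of_ne_one (qc_ne_one hp2)
  · have := gaussSum_mulShift_eq (qc p) (ZMod.stdAddChar (N := p)) (Units.mk0 a ha)
    rw [(qc_quad p).inv] at this
    simpa [gaussSum] using this

theorem exists_stdAddChar {p : ℕ} [Fact p.Prime] (χ : AddChar (ZMod p) ℂ) :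
    ∃ a : ZMod p, ∀ x, χ x = ZMod.stdAddChar (a * x) := by
  have hinj := AddChar.to_mulShift_inj_of_isPrimitive (ZMod.isPrimitive_stdAddChar p)
  have hbij : Function.Bijective (AddChar.mulShift (ZMod.stdAddChar (N := p))) := by
    rw [Fintype.bijective_iff_injective_and_card]
    exact ⟨hinj, by rw [AddChar.card_eq]⟩
  obtain ⟨a, rfl⟩ := hbij.2 χ
  exact ⟨a, fun x => rfl⟩

theorem quintic_char_sum {p : ℕ} [Fact p.Prime] (hp2 : p ≠ 2) {c : Fin 6 → ℤ} (hg : Good c p)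
    (χ : AddChar (ZMod p × ZMod p) ℂ) :
    ‖∑ z : ZMod p × ZMod p, qc p (qf (fun i => (c i : ZMod p)) z.1 z.2) * χ z‖ ≤ 61 * p := by
  classical
  let χ1 : AddChar (ZMod p) ℂ := χ.compAddMonoidHom (AddMonoidHom.inl _ _)
  let χ2 : AddChar (ZMod p) ℂ := χ.compAddMonoidHom (AddMonoidHom.inr _ _)
  obtain ⟨a, ha⟩ := exists_stdAddChar χ1
  obtain ⟨b, hb⟩ := exists_stdAddChar χ2
  have hχ : ∀ x y, χ (x, y) = ZMod.stdAddChar (a * x + b * y) := by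
    intro x y
    rw [AddChar.map_add_eq_mul, ← ha, ← hb]
    have : ((x, y) : ZMod p × ZMod p) = (x, 0) + (0, y) := by simp
    rw [this, AddChar.map_add_eq_mul]
    rfl
  set F : ZMod p → ZMod p → ZMod p := fun x y => qf (fun i => (c i : ZMod p)) x y with hF
  set τ := gaussSum (qc p) (ZMod.stdAddChar (N := p)) with hτ
  have hhom : ∀ t y, y ≠ 0 → qc p (F (t * y) y) = qc p (F t 1) * qc p y := by
    intro t y hy
    have h1 : F (t * y) y = F t 1 * (y ^ 2 * (y ^ 2 * y)) := by
      simp only [hF, qf]; ring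
    have h2 : qc p (y ^ 2) = 1 := by
      rw [qc_apply, map_pow, quadraticChar_sq_one hy]; simp
    rw [h1, map_mul, map_mul, map_mul, h2]; ring
  have hsplit : ∑ z : ZMod p × ZMod p, qc p (F z.1 z.2) * χ z
      = (∑ t : ZMod p, qc p (F t 1 * (a * t + b))) * τ + ∑ x : ZMod p, qc p (F x 0) * χ (x, 0) := by
    rw [Fintype.sum_prod_type_right]
    simp only
    rw [← Finset.add_sum_erase _ _ (Finset.mem_univ (0 : ZMod p)), add_comm]
    congr 1
    have h1 : ∀ y ∈ (Finset.univ.erase (0 : ZMod p)), ∑ x, qc p (F x y) * χ (x, y)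
        = ∑ t, qc p (F t 1) * (qc p y * ZMod.stdAddChar ((a * t + b) * y)) := by
      intro y hy
      have hy0 : y ≠ 0 := Finset.ne_of_mem_erase hy
      rw [← Equiv.sum_comp (Equiv.mulRight₀ y hy0)]
      refine Finset.sum_congr rfl fun t _ => ?_
      simp only [Equiv.mulRight₀_apply]
      rw [hhom t y hy0, hχ, mul_assoc]
      congr 3
      ring_nf
    rw [Finset.sum_congr rfl h1, Finset.sum_comm, Finset.sum_mul]
    refine Finset.sum_congr rfl fun t _ => ?_
    rw [← Finset.mul_sum, map_mul, mul_assoc, ← gauss_shift hp2]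
    congr 1
    rw [← Finset.add_sum_erase (Finset.univ) _ (Finset.mem_univ (0 : ZMod p))]
    simp [qc_zero]
  rw [hsplit]
  have hp0 : (0:ℝ) ≤ p := by positivity
  have hA : ‖(∑ t : ZMod p, qc p (F t 1 * (a * t + b)))‖ ≤ 60 * √(p : ℝ) := by
    by_cases hab : a = 0 ∧ b = 0
    · obtain ⟨rfl, rfl⟩ := hab
      simp [qc_zero]
    · have hab' : a ≠ 0 ∨ b ≠ 0 := by tauto
      have hw := weil (qf (fun i => Polynomial.C (c i : ZMod p)) Polynomial.X 1
        * (Polynomial.C a * Polynomial.X + Polynomial.C b)) (natDegree_lin_quint _ a b)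
        (fun k h => hg a b hab' k h)
      have e : (∑ t : ZMod p, qc p (F t 1 * (a * t + b))) =
          (((∑ x : ZMod p, quadraticChar (ZMod p) ((qf (fun i => Polynomial.C (c i : ZMod p))
            Polynomial.X 1 * (Polynomial.C a * Polynomial.X + Polynomial.C b)).eval x) : ℤ) : ℝ)
            : ℂ) := by
        push_cast
        refine Finset.sum_congr rfl fun t _ => ?_
        rw [qc_apply]
        congr 3
        simp [hF, qf]
      rw [e, Complex.norm_real]
      exact hw
  have hB : ‖∑ x : ZMod p, qc p (F x 0) * χ (x, 0)‖ ≤ p := by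
    refine (norm_sum_le _ _).trans ?_
    refine (Finset.sum_le_card_nsmul _ _ (1 : ℝ) fun x _ => ?_).trans (by simp)
    rw [norm_mul, AddChar.norm_apply, mul_one]
    exact qc_norm_le _ _
  refine (norm_add_le _ _).trans ?_
  rw [norm_mul, hτ, gauss_norm hp2]
  have h3 : 60 * √(p : ℝ) * √(p : ℝ) = 60 * p := by
    rw [mul_assoc, Real.mul_self_sqrt hp0]
  have := mul_le_mul_of_nonneg_right hA (Real.sqrt_nonneg (p : ℝ))
  linarith

end Quintic

end

section

namespace Quintic

open Finset

theorem card_congr_le (N m : ℕ) (hm : 0 < m) (x0 : ℤ) :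
    (((Icc (0 : ℤ) N).filter fun x => (m : ℤ) ∣ x - x0).card : ℝ) ≤ N / m + 1 := by
  have h1 : ((Icc (0 : ℤ) N).filter fun x => (m : ℤ) ∣ x - x0).card ≤ (Icc (0 : ℤ) (N / m)).card := by
    apply Finset.card_le_card_of_injOn (fun x => x / (m : ℤ))
    · intro x hx
      simp only [coe_filter, mem_Icc, Set.mem_ofPred_eq] at hx
      simp only [coe_Icc, Set.mem_Icc]
      exact ⟨Int.ediv_nonneg hx.1.1 (by positivity), Int.ediv_le_ediv (by exact_mod_cast hm) hx.1.2⟩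
    · intro x hx y hy hxy
      simp only [coe_filter, mem_Icc, Set.mem_ofPred_eq] at hx hy hxy
      have hd : (m : ℤ) ∣ x - y := by
        have := dvd_sub hx.2 hy.2
        simpa using this
      have h2 : x % m = y % m := Int.emod_eq_emod_iff_emod_sub_eq_zero.2
        (Int.emod_eq_zero_of_dvd hd)
      rw [← Int.mul_ediv_add_emod x m, ← Int.mul_ediv_add_emod y m, h2, hxy]
  have h2 : (Icc (0 : ℤ) (N / m)).card = N / m + 1 := by
    rw [Int.card_Icc]
    have : ((N : ℤ) / m) = ((N / m : ℕ) : ℤ) := by simp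
    rw [this, sub_zero]; exact_mod_cast rfl
  rw [h2] at h1
  have h3 : (((N / m + 1 : ℕ)) : ℝ) ≤ N / m + 1 := by
    push_cast
    gcongr
    exact Nat.cast_div_le
  exact le_trans (by exact_mod_cast h1) h3

theorem qf_cast {R : Type*} [CommRing R] (c : Fin 6 → ℤ) (x y : ℤ) :
    ((qf c x y : ℤ) : R) = qf (fun i => (c i : R)) x y := by
  simp [qf]

theorem qc_jacobi (p : ℕ) [Fact p.Prime] (n : ℤ) : qc p (n : ZMod p) = ((jacobiSym n p : ℤ) : ℂ) := by
  rw [← jacobiSym.legendreSym.to_jacobiSym, qc_apply]; rfl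

/-- the box -/
noncomputable def box (A B : ℕ) : Finset (ℤ × ℤ) := Icc (0 : ℤ) (2 * A : ℕ) ×ˢ Icc (0 : ℤ) (2 * B : ℕ)

theorem card_box (A B : ℕ) : (box A B).card = (2 * A + 1) * (2 * B + 1) := by
  rw [box, card_product, Int.card_Icc, Int.card_Icc]
  congr 1 <;> omega

theorem offdiag (c : Fin 6 → ℤ) (p q : ℕ) (hp : p.Prime) (hq : q.Prime) (hp2 : p ≠ 2) (hq2 : q ≠ 2)
    (hpq : p ≠ q) (gp : Good c p) (gq : Good c q) (A B : ℕ) :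
    |((∑ h ∈ box A B, ∑ h' ∈ box A B,
      jacobiSym (qf c (h.1 - h'.1) (h.2 - h'.2)) p * jacobiSym (qf c (h.1 - h'.1) (h.2 - h'.2)) q
        : ℤ) : ℝ)| ≤ 3721 * (p * q) *
        ((box A B).card * (((2 * A : ℕ) / (p * q : ℕ) + 1) * ((2 * B : ℕ) / (p * q : ℕ) + 1))) := by
  classical
  have : Fact p.Prime := ⟨hp⟩
  have : Fact q.Prime := ⟨hq⟩
  let ψ : (ZMod p × ZMod p) × (ZMod q × ZMod q) → ℂ := fun z =>
    qc p (qf (fun i => (c i : ZMod p)) z.1.1 z.1.2) * qc q (qf (fun i => (c i : ZMod q)) z.2.1 z.2.2)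
  have hM : ∀ χ : AddChar ((ZMod p × ZMod p) × (ZMod q × ZMod q)) ℂ,
      ‖∑ g, ψ g * χ g‖ ≤ (61 * p) * (61 * q) := by
    intro χ
    have hχ : ∀ u v, χ (u, v) = χ (u, 0) * χ (0, v) := by
      intro u v
      rw [← AddChar.map_add_eq_mul]; simp
    have e : ∑ g, ψ g * χ g =
        (∑ u, qc p (qf (fun i => (c i : ZMod p)) u.1 u.2) *
          (χ.compAddMonoidHom (AddMonoidHom.inl _ _)) u) *
        (∑ v, qc q (qf (fun i => (c i : ZMod q)) v.1 v.2) *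
          (χ.compAddMonoidHom (AddMonoidHom.inr _ _)) v) := by
      rw [Finset.sum_mul_sum, Fintype.sum_prod_type]
      refine Finset.sum_congr rfl fun u _ => Finset.sum_congr rfl fun v _ => ?_
      rw [hχ]
      simp only [ψ, AddChar.compAddMonoidHom_apply, AddMonoidHom.inl_apply, AddMonoidHom.inr_apply]
      ring
    rw [e, norm_mul]
    exact mul_le_mul (quintic_char_sum hp2 gp _) (quintic_char_sum hq2 gq _) (norm_nonneg _)
      (by positivity)
  let r : ℤ × ℤ → (ZMod p × ZMod p) × (ZMod q × ZMod q) := fun h => ((h.1, h.2), (h.1, h.2))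
  have hb := fourier_bound ψ _ hM (box A B) r
  have e : (∑ h ∈ box A B, ∑ h' ∈ box A B, ψ (r h - r h')) =
      (((∑ h ∈ box A B, ∑ h' ∈ box A B,
      jacobiSym (qf c (h.1 - h'.1) (h.2 - h'.2)) p * jacobiSym (qf c (h.1 - h'.1) (h.2 - h'.2)) q
        : ℤ) : ℝ) : ℂ) := by
    push_cast
    refine Finset.sum_congr rfl fun h _ => Finset.sum_congr rfl fun h' _ => ?_
    rw [← qc_jacobi, ← qc_jacobi, qf_cast, qf_cast]
    simp [ψ, r]
  rw [e, Complex.norm_real, Real.norm_eq_abs] at hb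
  refine hb.trans ?_
  have hcount : (((box A B ×ˢ box A B).filter fun x => r x.1 = r x.2).card : ℝ) ≤
      (box A B).card * (((2 * A : ℕ) / (p * q : ℕ) + 1) * ((2 * B : ℕ) / (p * q : ℕ) + 1)) := by
    have hpq0 : 0 < p * q := Nat.mul_pos hp.pos hq.pos
    have hdv : ∀ x x' : ℤ, (x : ZMod p) = x' → (x : ZMod q) = x' → ((p * q : ℕ) : ℤ) ∣ x' - x := by
      intro x x' h1 h2
      rw [ZMod.intCast_eq_intCast_iff_dvd_sub] at h1 h2
      push_cast
      exact IsCoprime.mul_dvd (Nat.isCoprime_iff_coprime.2 ((Nat.coprime_primes hp hq).2 hpq)) h1 h2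
    rw [Finset.card_filter, Finset.sum_product]
    push_cast
    rw [← nsmul_eq_mul]
    apply Finset.sum_le_card_nsmul
    intro h _
    have e1 : (∑ h' ∈ box A B, if r h = r h' then (1:ℝ) else 0)
        = (((box A B).filter fun h' => r h = r h').card : ℝ) := by
      rw [Finset.card_filter]; push_cast; rfl
    rw [e1]
    have hsub : ((box A B).filter fun h' => r h = r h') ⊆
        ((Icc (0 : ℤ) (2 * A : ℕ)).filter fun x => ((p * q : ℕ) : ℤ) ∣ x - h.1) ×ˢ
        ((Icc (0 : ℤ) (2 * B : ℕ)).filter fun x => ((p * q : ℕ) : ℤ) ∣ x - h.2) := by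
      intro h' hh'
      simp only [mem_filter, box, mem_product, r, Prod.mk.injEq] at hh' ⊢
      obtain ⟨⟨h1, h2⟩, ⟨h3, h4⟩, h5, h6⟩ := hh'
      exact ⟨⟨h1, hdv _ _ h3 h5⟩, ⟨h2, hdv _ _ h4 h6⟩⟩
    have hc := Finset.card_le_card hsub
    rw [card_product] at hc
    have k1 := card_congr_le (2 * A) (p * q) hpq0 h.1
    have k2 := card_congr_le (2 * B) (p * q) hpq0 h.2
    have : (((box A B).filter fun h' => r h = r h').card : ℝ) ≤
      (((Icc (0 : ℤ) (2 * A : ℕ)).filter fun x => ((p * q : ℕ) : ℤ) ∣ x - h.1).card : ℝ) *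
        (((Icc (0 : ℤ) (2 * B : ℕ)).filter fun x => ((p * q : ℕ) : ℤ) ∣ x - h.2).card : ℝ) := by
      exact_mod_cast hc
    have h3 := this.trans (mul_le_mul k1 k2 (by positivity) (by positivity))
    push_cast at h3 ⊢
    exact h3
  have : (61 * (p:ℝ)) * (61 * q) = 3721 * (p * q) := by ring
  rw [this]
  exact mul_le_mul_of_nonneg_left hcount (by positivity)

end Quintic

end

section

namespace Quintic

open Finset

/-- the sieving weight -/
noncomputable def wt (P : Finset ℕ) (m : ℤ) : ℝ := ∑ p ∈ P, (jacobiSym m p : ℝ)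

theorem wt_ge (P : Finset ℕ) (hP : ∀ p ∈ P, p.Prime) (n : ℤ)
    (h : 2 * (P.filter fun p : ℕ => (p : ℤ) ∣ n).card ≤ P.card) : (P.card : ℝ) / 2 ≤ wt P (n ^ 2) := by
  have h1 : ∀ p ∈ P, (jacobiSym (n ^ 2) p : ℝ) = if (p : ℤ) ∣ n then 0 else 1 := by
    intro p hp
    have : Fact p.Prime := ⟨hP p hp⟩
    rw [← jacobiSym.legendreSym.to_jacobiSym]
    split_ifs with hd
    · have : legendreSym p (n ^ 2) = 0 := by
        rw [legendreSym.eq_zero_iff]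
        rw [ZMod.intCast_zmod_eq_zero_iff_dvd]
        exact dvd_pow hd two_ne_zero
      rw [this]; simp
    · have : legendreSym p (n ^ 2) = 1 := by
        apply legendreSym.sq_one'
        rwa [Ne, ZMod.intCast_zmod_eq_zero_iff_dvd]
      rw [this]; simp
  unfold wt
  rw [Finset.sum_congr rfl h1]
  have h2 : (∑ p ∈ P, if (p : ℤ) ∣ n then (0:ℝ) else 1)
      = ((P.filter fun p : ℕ => ¬ (p : ℤ) ∣ n).card : ℝ) := by
    rw [Finset.card_filter]; push_cast
    refine Finset.sum_congr rfl fun p _ => ?_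
    split_ifs <;> simp_all
  rw [h2]
  have h3 := Finset.card_filter_add_card_filter_not (s := P) (fun p : ℕ => (p : ℤ) ∣ n)
  have h4 : P.card ≤ 2 * (P.filter fun p : ℕ => ¬ (p : ℤ) ∣ n).card := by omega
  have h5 : (P.card : ℝ) ≤ 2 * (P.filter fun p : ℕ => ¬ (p : ℤ) ∣ n).card := by exact_mod_cast h4
  linarith

theorem reps_lower (f : ℤ → ℤ → ℝ) (hf : ∀ x y, 0 ≤ f x y) (A B : ℕ) (Z : Finset (ℤ × ℤ)) (w : ℝ)
    (hZ : ∀ z ∈ Z, |z.1| ≤ A ∧ |z.2| ≤ B ∧ w ≤ f z.1 z.2) :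
    (Z.card : ℝ) * ((A + 1) * (B + 1)) * w ≤
      ∑ h ∈ box A B, ∑ h' ∈ box A B, f (h.1 - h'.1) (h.2 - h'.2) := by
  classical
  let U : Finset (ℤ × ℤ) := Icc (0 : ℤ) A ×ˢ Icc (0 : ℤ) B
  have hU : U.card = (A + 1) * (B + 1) := by
    simp only [U]
    rw [card_product, Int.card_Icc, Int.card_Icc]
    simp only [sub_zero]
    congr 1
  let φ : (ℤ × ℤ) × (ℤ × ℤ) → (ℤ × ℤ) × (ℤ × ℤ) := fun zu =>
    ((zu.2.1 + max zu.1.1 0, zu.2.2 + max zu.1.2 0),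
      (zu.2.1 + max (-zu.1.1) 0, zu.2.2 + max (-zu.1.2) 0))
  have hinj : Set.InjOn φ (Z ×ˢ U : Finset _) := by
    rintro ⟨⟨z1, z2⟩, ⟨u1, u2⟩⟩ _ ⟨⟨y1, y2⟩, ⟨v1, v2⟩⟩ _ he
    simp only [φ, Prod.mk.injEq] at he ⊢
    omega
  have hsub : (Z ×ˢ U).image φ ⊆ box A B ×ˢ box A B := by
    intro x hx
    obtain ⟨⟨⟨z1, z2⟩, ⟨u1, u2⟩⟩, hzu, rfl⟩ := Finset.mem_image.1 hx
    simp only [mem_product, U, mem_Icc] at hzu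
    obtain ⟨h1, h2, -⟩ := hZ _ hzu.1
    rw [abs_le] at h1 h2
    simp only [φ, mem_product, box, mem_Icc]
    simp only at h1 h2
    omega
  calc (Z.card : ℝ) * ((A + 1) * (B + 1)) * w
      = ∑ zu ∈ Z ×ˢ U, w := by
        rw [Finset.sum_const, card_product, hU, nsmul_eq_mul]; push_cast; ring
    _ ≤ ∑ zu ∈ Z ×ˢ U, f ((φ zu).1.1 - (φ zu).2.1) ((φ zu).1.2 - (φ zu).2.2) := by
        refine Finset.sum_le_sum fun zu hzu => ?_
        have e1 : (φ zu).1.1 - (φ zu).2.1 = zu.1.1 := by simp only [φ]; omega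
        have e2 : (φ zu).1.2 - (φ zu).2.2 = zu.1.2 := by simp only [φ]; omega
        rw [e1, e2]
        exact (hZ _ (mem_product.1 hzu).1).2.2
    _ = ∑ x ∈ (Z ×ˢ U).image φ, f (x.1.1 - x.2.1) (x.1.2 - x.2.2) := by
        rw [Finset.sum_image hinj]
    _ ≤ ∑ x ∈ box A B ×ˢ box A B, f (x.1.1 - x.2.1) (x.1.2 - x.2.2) :=
        Finset.sum_le_sum_of_subset_of_nonneg hsub fun _ _ _ => hf _ _
    _ = _ := by rw [Finset.sum_product]

theorem sieve_upper (c : Fin 6 → ℤ) (A B : ℕ) (P : Finset ℕ) (Q : ℝ) (hQ : 0 < Q)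
    (hP : ∀ p ∈ P, p.Prime ∧ p ≠ 2 ∧ Good c p ∧ (p : ℝ) ≤ Q ∧ Q ≤ (p : ℝ) ^ 2) :
    ∑ h ∈ box A B, ∑ h' ∈ box A B, (wt P (qf c (h.1 - h'.1) (h.2 - h'.2))) ^ 2 ≤
      P.card * ((box A B).card : ℝ) ^ 2 + (P.card : ℝ) ^ 2 * ((box A B).card *
        (3721 * (Q ^ 2 + 2 * A + 2 * B + 4 * A * B / Q))) := by
  classical
  set S : ℕ → ℕ → ℝ := fun p q => ∑ h ∈ box A B, ∑ h' ∈ box A B,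
    (jacobiSym (qf c (h.1 - h'.1) (h.2 - h'.2)) p : ℝ) *
      (jacobiSym (qf c (h.1 - h'.1) (h.2 - h'.2)) q : ℝ) with hS
  set E := (box A B).card * (3721 * (Q ^ 2 + 2 * A + 2 * B + 4 * A * B / Q)) with hE
  have hE0 : 0 ≤ E := by positivity
  have e : ∑ h ∈ box A B, ∑ h' ∈ box A B, (wt P (qf c (h.1 - h'.1) (h.2 - h'.2))) ^ 2
      = ∑ p ∈ P, ∑ q ∈ P, S p q := by
    simp only [wt, pow_two, Finset.sum_mul_sum, hS]
    rw [Finset.sum_comm]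
    refine (Finset.sum_congr rfl fun h' _ => Finset.sum_comm).trans ?_
    rw [Finset.sum_comm]
    refine Finset.sum_congr rfl fun p _ => ?_
    refine (Finset.sum_congr rfl fun h' _ => Finset.sum_comm).trans ?_
    rw [Finset.sum_comm]
    refine Finset.sum_congr rfl fun q _ => ?_
    rw [Finset.sum_comm]
  have hdiag : ∀ p ∈ P, S p p ≤ ((box A B).card : ℝ) ^ 2 := by
    intro p hp
    rw [pow_two, hS]
    simp only
    have hj : ∀ m : ℤ, (jacobiSym m p : ℝ) * (jacobiSym m p : ℝ) ≤ 1 := by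
      intro m
      rcases jacobiSym.trichotomy m p with h | h | h <;> rw [h] <;> norm_num
    rw [← nsmul_eq_mul]
    refine Finset.sum_le_card_nsmul _ _ _ fun h _ => ?_
    refine (Finset.sum_le_card_nsmul _ _ (1:ℝ) fun h' _ => hj _).trans (by simp)
  have hoff : ∀ p ∈ P, ∀ q ∈ P, p ≠ q → S p q ≤ E := by
    intro p hp q hq hpq
    obtain ⟨p1, p2, p3, p4, p5⟩ := hP p hp
    obtain ⟨q1, q2, q3, q4, q5⟩ := hP q hq
    have h1 := (le_abs_self _).trans (offdiag c p q p1 q1 p2 q2 hpq p3 q3 A B)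
    have h2 : S p q ≤ 3721 * (p * q) *
        ((box A B).card * (((2 * A : ℕ) / (p * q : ℕ) + 1) * ((2 * B : ℕ) / (p * q : ℕ) + 1))) := by
      refine le_trans (le_of_eq ?_) h1
      rw [hS]; push_cast; rfl
    refine h2.trans ?_
    have hp0 : (0:ℝ) < p := by exact_mod_cast p1.pos
    have hq0 : (0:ℝ) < q := by exact_mod_cast q1.pos
    set m : ℝ := p * q with hm
    have hm0 : 0 < m := by positivity
    have hmQ : m ≤ Q ^ 2 := by rw [pow_two]; exact mul_le_mul p4 q4 hq0.le hQ.le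
    have hQm : Q ≤ m := by
      have : Q ^ 2 ≤ m ^ 2 := by
        rw [hm, mul_pow, pow_two Q]
        exact mul_le_mul p5 q5 hQ.le (by positivity)
      exact le_of_sq_le_sq this hm0.le
    have hexp : 3721 * m * ((box A B).card * (((2 * A : ℕ) / (p * q : ℕ) + 1) *
        ((2 * B : ℕ) / (p * q : ℕ) + 1))) =
        (box A B).card * (3721 * (m + 2 * A + 2 * B + 4 * A * B / m)) := by
      push_cast
      rw [← hm]
      field_simp
      ring
    rw [hexp, hE]
    gcongr
  rw [e]
  have : ∀ p ∈ P, ∑ q ∈ P, S p q ≤ ((box A B).card : ℝ) ^ 2 + P.card * E := by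
    intro p hp
    rw [← Finset.add_sum_erase _ _ hp]
    refine add_le_add (hdiag p hp) ?_
    refine (Finset.sum_le_card_nsmul _ _ E fun q hq => ?_).trans ?_
    · exact hoff p hp q (Finset.mem_of_mem_erase hq) (Finset.ne_of_mem_erase hq).symm
    · rw [nsmul_eq_mul]
      gcongr
      exact Finset.erase_subset _ _
  refine (Finset.sum_le_card_nsmul _ _ _ this).trans (le_of_eq ?_)
  rw [nsmul_eq_mul]; ring

theorem sieve (c : Fin 6 → ℤ) (A B : ℕ) (P : Finset ℕ) (Q : ℝ) (hQ : 0 < Q)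
    (hP : ∀ p ∈ P, p.Prime ∧ p ≠ 2 ∧ Good c p ∧ (p : ℝ) ≤ Q ∧ Q ≤ (p : ℝ) ^ 2)
    (hP0 : 0 < P.card) (Z : Finset (ℤ × ℤ))
    (hZ : ∀ z ∈ Z, |z.1| ≤ A ∧ |z.2| ≤ B ∧ ∃ n : ℤ, qf c z.1 z.2 = n ^ 2 ∧
      2 * (P.filter fun p : ℕ => (p : ℤ) ∣ n).card ≤ P.card) :
    (Z.card : ℝ) ≤ 16 * ((2 * A + 1) * (2 * B + 1)) / P.card +
      59536 * (Q ^ 2 + 2 * A + 2 * B + 4 * A * B / Q) := by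
  have h1 := reps_lower (fun x y => (wt P (qf c x y)) ^ 2) (fun _ _ => sq_nonneg _) A B Z
    (((P.card : ℝ) / 2) ^ 2) (by
      intro z hz
      obtain ⟨z1, z2, n, hn, hc⟩ := hZ z hz
      refine ⟨z1, z2, ?_⟩
      have := wt_ge P (fun p hp => (hP p hp).1) n hc
      simp only [hn]
      gcongr)
  have h2 := h1.trans (sieve_upper c A B P Q hQ hP)
  set E := Q ^ 2 + 2 * A + 2 * B + 4 * A * B / Q with hE
  rw [card_box] at h2
  push_cast at h2
  set b : ℝ := (2 * A + 1) * (2 * B + 1) with hb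
  have hb0 : 0 < b := by positivity
  have hbb : b ≤ 4 * ((A + 1) * (B + 1)) := by
    rw [hb]
    have : (0:ℝ) ≤ A := by positivity
    have : (0:ℝ) ≤ B := by positivity
    nlinarith
  set k : ℝ := (P.card : ℝ) with hk
  have hk0 : 0 < k := by rw [hk]; exact_mod_cast hP0
  have h3 : (Z.card : ℝ) * (b / 4) * (k / 2) ^ 2 ≤ k * b ^ 2 + k ^ 2 * (b * (3721 * E)) := by
    refine le_trans ?_ h2
    gcongr
    linarith
  have h4 : (Z.card : ℝ) * (b * k ^ 2) ≤ (16 * b / k + 59536 * E) * (b * k ^ 2) := by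
    have : (16 * b / k + 59536 * E) * (b * k ^ 2) = 16 * (k * b ^ 2 + k ^ 2 * (b * (3721 * E))) := by
      field_simp; ring
    rw [this]; linarith
  exact le_of_mul_le_mul_right h4 (by positivity)

end Quintic

end

section

namespace Quintic

open Finset

theorem omega_bound (n : ℕ) (hn : n ≠ 0) : (n.primeFactors.card : ℝ) ≤ 2 * Real.log n := by
  have h1 : 2 ^ n.primeFactors.card ≤ n := by
    calc 2 ^ n.primeFactors.card = ∏ p ∈ n.primeFactors, 2 := by simp
      _ ≤ ∏ p ∈ n.primeFactors, p :=
        Finset.prod_le_prod' fun p hp => (Nat.prime_of_mem_primeFactors hp).two_le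
      _ ≤ n := Nat.le_of_dvd (Nat.pos_of_ne_zero hn) (Nat.prod_primeFactors_dvd n)
  have h2 : (2:ℝ) ^ n.primeFactors.card ≤ n := by exact_mod_cast h1
  have h3 := Real.log_le_log (by positivity) h2
  rw [Real.log_pow] at h3
  have := Real.log_two_gt_d9
  have h4 : (0:ℝ) ≤ n.primeFactors.card := by positivity
  nlinarith

theorem pi_lower (Q : ℝ) (hQ : 400000 ≤ Q) :
    0.6 * Q / Real.log Q ≤ Nat.primeCounting ⌊Q⌋₊ := by
  refine le_trans ?_ (Chebyshev.pi_ge' (x := Q) (by linarith))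
  have hl : 0 < Real.log Q := Real.log_pos (by linarith)
  apply div_le_div_of_nonneg_right _ hl.le
  have h1 : Real.log (Q + 2) ≤ (Q + 2) / 1024 + 10 := by
    have e : Q + 2 = (Q + 2) / 1024 * 2 ^ 10 := by norm_num
    rw [e, Real.log_mul (by positivity) (by positivity), Real.log_pow]
    have := Real.log_le_sub_one_of_pos (x := (Q + 2) / 1024) (by positivity)
    have := Real.log_two_lt_d9
    push_cast
    have e2 : (Q + 2) / 1024 * 2 ^ 10 / 1024 = (Q+2) / 1024 := by ring
    rw [e2]
    linarith
  have := Real.log_two_gt_d9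
  nlinarith

theorem qf_bound (c : Fin 6 → ℤ) (H : ℕ) (hc : ∀ i, |c i| ≤ H) (x y : ℤ) (X Y : ℝ) (hX : 1 ≤ X)
    (hY : 1 ≤ Y) (hx : (|x| : ℝ) ≤ X) (hy : (|y| : ℝ) ≤ Y) :
    ((|qf c x y| : ℤ) : ℝ) ≤ 6 * H * (X * Y) ^ 5 := by
  have key : ∀ i : Fin 6, ∀ a b : ℕ, a ≤ 5 → b ≤ 5 →
      |(c i : ℝ) * (x:ℝ) ^ a * (y:ℝ) ^ b| ≤ H * (X * Y) ^ 5 := by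
    intro i a b ha hb
    rw [abs_mul, abs_mul, abs_pow, abs_pow, mul_assoc, mul_pow]
    have h1 : |(c i : ℝ)| ≤ H := by exact_mod_cast hc i
    have h2 : |(x : ℝ)| ^ a ≤ X ^ 5 :=
      (pow_le_pow_left₀ (abs_nonneg _) hx a).trans (pow_le_pow_right₀ hX ha)
    have h3 : |(y : ℝ)| ^ b ≤ Y ^ 5 :=
      (pow_le_pow_left₀ (abs_nonneg _) hy b).trans (pow_le_pow_right₀ hY hb)
    gcongr
  have k0 := abs_le.1 (key 0 5 0 (by norm_num) (by norm_num))
  have k1 := abs_le.1 (key 1 4 1 (by norm_num) (by norm_num))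
  have k2 := abs_le.1 (key 2 3 2 (by norm_num) (by norm_num))
  have k3 := abs_le.1 (key 3 2 3 (by norm_num) (by norm_num))
  have k4 := abs_le.1 (key 4 1 4 (by norm_num) (by norm_num))
  have k5 := abs_le.1 (key 5 0 5 (by norm_num) (by norm_num))
  push_cast
  rw [qf_cast]
  unfold qf
  rw [abs_le]
  constructor <;> nlinarith

end Quintic

end

section

namespace Quintic

open Finset

theorem abs_le_floor (a : ℤ) (X : ℝ) (h : (|a| : ℝ) ≤ X) : |a| ≤ (⌊X⌋₊ : ℤ) := by
  have : a.natAbs ≤ ⌊X⌋₊ := by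
    apply Nat.le_floor
    rw [Nat.cast_natAbs]; push_cast; exact h
  rw [Int.abs_eq_natAbs]
  exact_mod_cast this

theorem natAbs_le_sq (n : ℤ) (hn0 : n ≠ 0) : ((n.natAbs : ℕ) : ℝ) ≤ ((|n ^ 2| : ℤ) : ℝ) := by
  have : (n.natAbs : ℤ) ≤ |n ^ 2| := by
    rw [Int.natCast_natAbs, abs_pow]
    have : 1 ≤ |n| := Int.one_le_abs hn0
    nlinarith
  have h2 : (((n.natAbs : ℕ) : ℤ) : ℝ) ≤ ((|n ^ 2| : ℤ) : ℝ) := Int.cast_le.2 this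
  rwa [Int.cast_natCast] at h2

theorem box_trivial (X Y : ℝ) (hX : 1 ≤ X) (hY : 1 ≤ Y) (Z : Finset (ℤ × ℤ))
    (hZ : ∀ z ∈ Z, (|z.1| : ℝ) ≤ X ∧ (|z.2| : ℝ) ≤ Y) :
    (Z.card : ℝ) ≤ 9 * (X * Y) := by
  have hsub : Z ⊆ Icc (-(⌊X⌋₊ : ℤ)) ⌊X⌋₊ ×ˢ Icc (-(⌊Y⌋₊ : ℤ)) ⌊Y⌋₊ := by
    intro z hz
    obtain ⟨h1, h2⟩ := hZ z hz
    have h1 := abs_le.1 (abs_le_floor _ _ h1)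
    have h2 := abs_le.1 (abs_le_floor _ _ h2)
    simp only [mem_product, mem_Icc]
    exact ⟨h1, h2⟩
  have h := Finset.card_le_card hsub
  rw [card_product, Int.card_Icc, Int.card_Icc] at h
  have h' : Z.card ≤ (2 * ⌊X⌋₊ + 1) * (2 * ⌊Y⌋₊ + 1) := by
    refine h.trans (le_of_eq ?_)
    congr 1 <;> omega
  have h2 : (Z.card : ℝ) ≤ (2 * ⌊X⌋₊ + 1) * (2 * ⌊Y⌋₊ + 1) := by exact_mod_cast h'
  have hx := Nat.floor_le (show 0 ≤ X by linarith)
  have hy := Nat.floor_le (show 0 ≤ Y by linarith)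
  calc (Z.card : ℝ) ≤ _ := h2
    _ ≤ (3 * X) * (3 * Y) := by gcongr <;> linarith
    _ = _ := by ring

/-- the primes used in the square sieve -/
noncomputable def sieveP (Q : ℝ) (D : ℕ) : Finset ℕ :=
  open Classical in (Finset.range (⌊Q⌋₊ + 1)).filter fun p => p.Prime ∧ ¬ p ∣ 2 * D ∧ Q ≤ (p : ℝ) ^ 2

theorem sieveP_card (Q L : ℝ) (D : ℕ) (hD : D ≠ 0) (hL : 0.69 ≤ L) (hQL : 10 ^ 6 * L ^ 2 ≤ Q)
    (hlog : 3 * Real.log Q ≤ L) (hDL : Real.log (2 * D) ≤ 601 * L) :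
    Q / (2 * L) ≤ (sieveP Q D).card := by
  classical
  have hQ : 400000 ≤ Q := by nlinarith
  have h1 := pi_lower Q hQ
  have hl : 0 < Real.log Q := Real.log_pos (by linarith)
  have h2 : Nat.primeCounting ⌊Q⌋₊ ≤
      (sieveP Q D).card + (2 * D).primeFactors.card + (⌊√Q⌋₊ + 1) := by
    rw [Nat.primeCounting, Nat.primeCounting', Nat.count_eq_card_filter_range]
    have : (Finset.range (⌊Q⌋₊ + 1)).filter Nat.Prime ⊆
        sieveP Q D ∪ (2 * D).primeFactors ∪ Finset.range (⌊√Q⌋₊ + 1) := by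
      intro p hp
      simp only [mem_filter, Finset.mem_range] at hp
      simp only [mem_union, sieveP, mem_filter, Finset.mem_range, Nat.mem_primeFactors]
      by_cases a : p ∣ 2 * D
      · left; right; exact ⟨hp.2, a, by omega⟩
      by_cases b : Q ≤ (p:ℝ) ^ 2
      · left; left; exact ⟨hp.1, hp.2, a, b⟩
      right
      have : p ≤ ⌊√Q⌋₊ := by
        apply Nat.le_floor
        exact Real.le_sqrt_of_sq_le (not_le.1 b).le
      omega
    refine (card_le_card this).trans ((card_union_le _ _).trans ?_)
    gcongr
    · exact card_union_le _ _
    · simp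
  have h3 := omega_bound (2 * D) (by omega)
  have h4 := Nat.floor_le (Real.sqrt_nonneg Q)
  have h5 : (Nat.primeCounting ⌊Q⌋₊ : ℝ) ≤
      (sieveP Q D).card + (2 * D).primeFactors.card + (⌊√Q⌋₊ + 1) := by exact_mod_cast h2
  push_cast at h3
  have h6 : 1.8 * Q / L ≤ 0.6 * Q / Real.log Q := by
    rw [div_le_div_iff₀ (by linarith) hl]
    nlinarith
  have h7 : 1000 * L ≤ √Q := by
    apply Real.le_sqrt_of_sq_le
    nlinarith
  have hL0 : 0 < L := by linarith
  have h8 : √Q ≤ Q / L / 1000 := by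
    rw [div_div, le_div_iff₀ (by positivity)]
    calc √Q * (L * 1000) ≤ √Q * √Q := by gcongr; linarith
      _ = Q := Real.mul_self_sqrt (by linarith)
  have h9 : L ≤ Q / L / 10 ^ 6 := by
    rw [div_div, le_div_iff₀ (by positivity)]
    nlinarith
  have e1 : 1.8 * Q / L = 1.8 * (Q / L) := by ring
  have e2 : Q / (2 * L) = (Q / L) / 2 := by rw [div_div, mul_comm]
  have h10 : 0 < Q / L := by positivity
  rw [e2]
  rw [e1] at h6
  norm_num at h6 h8 h9 ⊢
  linarith

set_option maxHeartbeats 1000000 in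
theorem part_B : ∃ K : ℝ, 0 < K ∧ ∀ c : Fin 6 → ℤ, NonExc c → ∀ H : ℕ, 1 ≤ H →
    (∀ i, |c i| ≤ H) → ∀ X Y : ℝ, 1 ≤ X → 1 ≤ Y → ∀ Z : Finset (ℤ × ℤ),
    (∀ z ∈ Z, (|z.1| : ℝ) ≤ X ∧ (|z.2| : ℝ) ≤ Y ∧ ∃ n : ℤ, n ≠ 0 ∧ qf c z.1 z.2 = n ^ 2) →
    (Z.card : ℝ) ≤ K * ((X * Y) ^ ((2:ℝ)/3) + X + Y) * Real.log (2 * H * X * Y) ^ 2 := by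
  refine ⟨10 ^ 7, by norm_num, ?_⟩
  intro c hc H hH1 hH X Y hX hY Z hZ
  set L := Real.log (2 * H * X * Y) with hL
  set Q : ℝ := (X * Y) ^ ((1:ℝ)/3) with hQ
  have hXY : 1 ≤ X * Y := by nlinarith
  have hQ3 : Q ^ 3 = X * Y := by
    rw [hQ, ← Real.rpow_natCast, ← Real.rpow_mul (by linarith)]; norm_num
  have hQ2 : (X * Y) ^ ((2:ℝ)/3) = Q ^ 2 := by
    rw [hQ, ← Real.rpow_natCast, ← Real.rpow_mul (by linarith)]; norm_num
  have hQ1 : 1 ≤ Q := Real.one_le_rpow hXY (by norm_num)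
  rw [hQ2]
  have hHR : (1:ℝ) ≤ H := by exact_mod_cast hH1
  have hbig : X * Y ≤ 2 * H * X * Y := by nlinarith
  have hL2 : 0.69 ≤ L := by
    have := Real.log_two_gt_d9
    have h2 : Real.log 2 ≤ L := Real.log_le_log (by norm_num) (by nlinarith)
    linarith
  have hLL : 0.47 ≤ L ^ 2 := by nlinarith
  have hlog : 3 * Real.log Q ≤ L := by
    have : Real.log (Q ^ 3) ≤ L := by
      rw [hQ3]; exact Real.log_le_log (by linarith) hbig
    rw [Real.log_pow] at this; exact_mod_cast this
  by_cases hcase : Q < 10 ^ 6 * L ^ 2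
  · have := box_trivial X Y hX hY Z fun z hz => ⟨(hZ z hz).1, (hZ z hz).2.1⟩
    rw [← hQ3] at this
    calc (Z.card : ℝ) ≤ 9 * Q ^ 3 := this
      _ = 9 * Q ^ 2 * Q := by ring
      _ ≤ 9 * Q ^ 2 * (10 ^ 6 * L ^ 2) := by gcongr
      _ ≤ 10 ^ 7 * (Q ^ 2 + X + Y) * L ^ 2 := by
        have : 9 * Q ^ 2 * 10 ^ 6 ≤ 10 ^ 7 * (Q ^ 2 + X + Y) := by nlinarith
        have := mul_le_mul_of_nonneg_right this (sq_nonneg L)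
        linarith
  push Not at hcase
  obtain ⟨D, hD0, hD, hgood⟩ := good_primes hc H hH1 hH
  have hlH : Real.log (2 * H) ≤ L := by
    apply Real.log_le_log (by positivity)
    have : (0:ℝ) < 2 * H := by positivity
    nlinarith
  have hDL : Real.log (2 * D) ≤ 601 * L := by
    have hDR : (D : ℝ) ≤ (2 * H) ^ 600 := by exact_mod_cast hD
    have : (0:ℝ) < D := by exact_mod_cast Nat.pos_of_ne_zero hD0
    have h1 : Real.log (2 * D) ≤ Real.log ((2 * H) ^ 601) := by
      apply Real.log_le_log (by positivity)
      rw [pow_succ']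
      gcongr
      linarith
    rw [Real.log_pow] at h1
    push_cast at h1
    linarith
  clear hD
  have hPc := sieveP_card Q L D hD0 hL2 hcase hlog hDL
  set P := sieveP Q D with hPdef
  have hL0 : 0 < L := by linarith
  have hPpos : 0 < Q / (2 * L) := by positivity
  have hmem : ∀ p ∈ P, p.Prime ∧ p ≠ 2 ∧ Good c p ∧ (p:ℝ) ≤ Q ∧ Q ≤ (p:ℝ) ^ 2 := by
    classical
    intro p hp
    simp only [hPdef, sieveP, mem_filter, Finset.mem_range] at hp
    obtain ⟨h1, h2, h3, h4⟩ := hp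
    refine ⟨h2, ?_, hgood p h2 fun h => h3 (h.mul_left 2), ?_, h4⟩
    · rintro rfl; exact h3 (dvd_mul_right 2 D)
    · exact (Nat.le_floor_iff (by linarith)).1 (by omega)
  have hs := sieve c ⌊X⌋₊ ⌊Y⌋₊ P Q (by linarith) hmem
    (by have : (0:ℝ) < P.card := by linarith
        exact_mod_cast this) Z ?_
  · have hx := Nat.floor_le (show 0 ≤ X by linarith)
    have hy := Nat.floor_le (show 0 ≤ Y by linarith)
    have a1 : 16 * ((2 * (⌊X⌋₊:ℝ) + 1) * (2 * ⌊Y⌋₊ + 1)) / P.card ≤ 288 * Q ^ 2 * L := by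
      calc 16 * ((2 * (⌊X⌋₊:ℝ) + 1) * (2 * ⌊Y⌋₊ + 1)) / P.card
          ≤ 16 * ((3 * X) * (3 * Y)) / (Q / (2 * L)) := by
            gcongr <;> linarith
        _ = 288 * (X * Y) * L / Q := by field_simp; ring
        _ = 288 * Q ^ 2 * L := by rw [← hQ3]; field_simp
    have a2 : Q ^ 2 + 2 * (⌊X⌋₊:ℝ) + 2 * ⌊Y⌋₊ + 4 * ⌊X⌋₊ * ⌊Y⌋₊ / Q ≤
        5 * (Q ^ 2 + X + Y) := by
      have : 4 * (⌊X⌋₊:ℝ) * ⌊Y⌋₊ / Q ≤ 4 * Q ^ 2 := by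
        calc 4 * (⌊X⌋₊:ℝ) * ⌊Y⌋₊ / Q ≤ 4 * X * Y / Q := by gcongr
          _ = 4 * Q ^ 2 := by rw [mul_assoc, ← hQ3]; field_simp
      linarith
    have a3 : L ≤ 2 * L ^ 2 := by nlinarith
    have a4 : 0 ≤ Q ^ 2 + X + Y := by positivity
    calc (Z.card : ℝ) ≤ _ := hs
      _ ≤ 288 * Q ^ 2 * L + 59536 * (5 * (Q ^ 2 + X + Y)) := by gcongr
      _ ≤ 288 * (Q ^ 2 + X + Y) * (2 * L ^ 2) + 59536 * (5 * (Q ^ 2 + X + Y)) * (3 * L ^ 2) := by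
        apply add_le_add
        · apply mul_le_mul _ a3 hL0.le (by positivity)
          nlinarith
        · have : 1 ≤ 3 * L ^ 2 := by linarith
          nlinarith
      _ ≤ _ := by nlinarith [mul_nonneg a4 (sq_nonneg L)]
  · intro z hz
    obtain ⟨z1, z2, n, hn0, hn⟩ := hZ z hz
    refine ⟨abs_le_floor _ _ z1, abs_le_floor _ _ z2, n, hn, ?_⟩
    have b1 := qf_bound c H hH z.1 z.2 X Y hX hY z1 z2
    have b2 : (n.natAbs : ℝ) ≤ (2 * H * X * Y) ^ 5 := by
      have : ((n.natAbs : ℕ) : ℝ) ≤ ((|qf c z.1 z.2| : ℤ) : ℝ) := by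
        rw [hn]; exact natAbs_le_sq n hn0
      refine this.trans (b1.trans ?_)
      have e : (2 * H * X * Y) ^ 5 = 32 * (H:ℝ) ^ 5 * (X * Y) ^ 5 := by ring
      rw [e]
      have : (H:ℝ) ≤ H ^ 5 := le_self_pow₀ hHR (by norm_num)
      gcongr ?_ * _
      nlinarith
    have b3 := omega_bound n.natAbs (by omega)
    have b4 : Real.log n.natAbs ≤ 5 * L := by
      have := Real.log_le_log (by exact_mod_cast Int.natAbs_pos.2 hn0) b2
      rw [Real.log_pow, ← hL] at this
      push_cast at this
      exact this
    have b5 : (P.filter fun p : ℕ => (p : ℤ) ∣ n).card ≤ n.natAbs.primeFactors.card := by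
      apply card_le_card
      intro p hp
      rw [mem_filter] at hp
      rw [Nat.mem_primeFactors]
      exact ⟨(hmem p hp.1).1, Int.natCast_dvd.1 hp.2, by omega⟩
    have b6 : ((P.filter fun p : ℕ => (p : ℤ) ∣ n).card : ℝ) ≤ n.natAbs.primeFactors.card := by
      exact_mod_cast b5
    have b7 : 20 * L ≤ Q / (2 * L) := by
      rw [le_div_iff₀ (by positivity)]
      nlinarith
    have : (2 * (P.filter fun p : ℕ => (p : ℤ) ∣ n).card : ℝ) ≤ P.card := by linarith
    exact_mod_cast this

end Quintic

end

section

namespace Quintic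

open Finset

theorem log_factorial_eq (n : ℕ) : Real.log (n.factorial) =
    ∑ p ∈ Nat.primesLE n, ((n.factorial).factorization p : ℝ) * Real.log p := by
  rw [Real.log_nat_eq_sum_factorization, Finsupp.sum_of_support_subset (s := Nat.primesLE n)]
  · intro p hp
    rw [Nat.support_factorization, Nat.mem_primeFactors] at hp
    rw [Nat.mem_primesLE]
    exact ⟨(Nat.Prime.dvd_factorial hp.1).1 hp.2.1, hp.1⟩
  · simp

theorem mertens_lower (n : ℕ) (hn : 1 ≤ n) :
    Real.log n - 1 ≤ ∑ p ∈ Nat.primesLE n, Real.log p / ((p : ℝ) - 1) := by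
  have h1 := Stirling.le_log_factorial_stirling (n := n) (by omega)
  rw [log_factorial_eq] at h1
  have hn' : (1:ℝ) ≤ n := by exact_mod_cast hn
  have h0 : 0 ≤ Real.log n := Real.log_nonneg hn'
  have h0' : 0 ≤ Real.log (2 * Real.pi) := Real.log_nonneg (by nlinarith [Real.pi_gt_three])
  have h2 : ∑ p ∈ Nat.primesLE n, ((n.factorial).factorization p : ℝ) * Real.log p ≤
      n * ∑ p ∈ Nat.primesLE n, Real.log p / ((p : ℝ) - 1) := by
    rw [Finset.mul_sum]
    refine Finset.sum_le_sum fun p hp => ?_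
    rw [Nat.mem_primesLE] at hp
    have hp2 : (2:ℝ) ≤ p := by exact_mod_cast hp.2.two_le
    have hl : 0 ≤ Real.log p := Real.log_nonneg (by linarith)
    have h3 : (p - 1) * (n.factorial).factorization p ≤ n := by
      rw [Nat.sub_one_mul_factorization_factorial hp.2]; omega
    have h4 : ((p:ℝ) - 1) * (n.factorial).factorization p ≤ n := by
      have : (((p - 1 : ℕ) : ℝ)) * (n.factorial).factorization p ≤ n := by exact_mod_cast h3
      rwa [Nat.cast_sub hp.2.one_le, Nat.cast_one] at this
    rw [mul_div_assoc', le_div_iff₀ (by linarith)]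
    nlinarith
  have h5 : n * (Real.log n - 1) ≤ n * ∑ p ∈ Nat.primesLE n, Real.log p / ((p : ℝ) - 1) := by
    linarith
  exact le_of_mul_le_mul_left h5 (by linarith)

theorem mertens_upper (n : ℕ) (hn : 1 ≤ n) :
    ∑ p ∈ Nat.primesLE n, Real.log p / (p : ℝ) ≤ Real.log n + Real.log 4 := by
  have hn' : (1:ℝ) ≤ n := by exact_mod_cast hn
  have h1 : Real.log n.factorial ≤ n * Real.log n := by
    rw [← Real.log_pow]
    apply Real.log_le_log (by exact_mod_cast n.factorial_pos)
    exact_mod_cast n.factorial_le_pow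
  have h2 : n * ∑ p ∈ Nat.primesLE n, Real.log p / (p : ℝ) ≤
      Real.log n.factorial + ∑ p ∈ Nat.primesLE n, Real.log p := by
    rw [log_factorial_eq, Finset.mul_sum, ← Finset.sum_add_distrib]
    refine Finset.sum_le_sum fun p hp => ?_
    rw [Nat.mem_primesLE] at hp
    have hp2 : (2:ℝ) ≤ p := by exact_mod_cast hp.2.two_le
    have hl : 0 ≤ Real.log p := Real.log_nonneg (by linarith)
    have h3 : n / p ≤ (n.factorial).factorization p := by
      rw [Nat.factorization_factorial hp.2 (Nat.lt_succ_self _)]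
      have h1 : 1 ∈ Finset.Ico 1 (Nat.log p n).succ := by
        rw [Finset.mem_Ico]
        exact ⟨le_rfl, Nat.succ_lt_succ (Nat.log_pos hp.2.one_lt hp.1)⟩
      have := Finset.single_le_sum (f := fun i => n / p ^ i) (fun _ _ => Nat.zero_le _) h1
      simpa using this
    have h4 : (n:ℝ) / p - 1 ≤ (n.factorial).factorization p := by
      have a : (n:ℝ) / p ≤ (n / p : ℕ) + 1 := by
        rw [div_le_iff₀ (by linarith)]
        have : n < p * (n / p + 1) := Nat.lt_mul_div_succ n hp.2.pos
        have : (n:ℝ) < p * ((n / p : ℕ) + 1) := by exact_mod_cast this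
        linarith
      have b : ((n / p : ℕ) : ℝ) ≤ (n.factorial).factorization p := by exact_mod_cast h3
      linarith
    have : n * (Real.log p / p) = ((n:ℝ) / p) * Real.log p := by ring
    rw [this]
    nlinarith
  have h3 := Chebyshev.theta_le_log4_mul_x (x := n) (by linarith)
  rw [Chebyshev.theta_eq_sum_primesLE_log] at h3
  have h5 : n * ∑ p ∈ Nat.primesLE n, Real.log p / (p : ℝ) ≤ n * (Real.log n + Real.log 4) := by
    linarith
  exact le_of_mul_le_mul_left h5 (by linarith)

theorem sum_log_primeFactors (D : ℕ) (hD : D ≠ 0) :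
    ∑ p ∈ D.primeFactors, Real.log p ≤ Real.log D := by
  rw [← Real.log_prod (fun p hp => by
    exact_mod_cast (Nat.prime_of_mem_primeFactors hp).ne_zero)]
  apply Real.log_le_log
  · apply Finset.prod_pos
    intro p hp
    exact_mod_cast (Nat.prime_of_mem_primeFactors hp).pos
  · have := Nat.le_of_dvd (Nat.pos_of_ne_zero hD) (Nat.prod_primeFactors_dvd D)
    have h2 : ((∏ p ∈ D.primeFactors, p : ℕ) : ℝ) ≤ D := by exact_mod_cast this
    rwa [Nat.cast_prod] at h2

theorem bad_sum (D : ℕ) (hD : D ≠ 0) :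
    ∑ p ∈ D.primeFactors, Real.log p / (p : ℝ) ≤
      Real.log (Real.log D + 1) + Real.log 4 + 1 := by
  classical
  set l := Real.log D with hl
  have hl0 : 0 ≤ l := Real.log_nonneg (by exact_mod_cast Nat.one_le_iff_ne_zero.2 hD)
  set n := ⌊l⌋₊ + 1 with hn
  have hn1 : (n:ℝ) ≤ l + 1 := by
    have := Nat.floor_le hl0
    rw [hn]; push_cast; linarith
  have hn2 : l ≤ n := by
    have := Nat.lt_floor_add_one l
    rw [hn]; push_cast; linarith
  have hn0 : (0:ℝ) < n := by rw [hn]; positivity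
  have key : ∀ p ∈ D.primeFactors, Real.log p / (p:ℝ) ≤
      (if p ≤ n then Real.log p / (p:ℝ) else 0) + Real.log p / n := by
    intro p hp
    have hp2 := (Nat.prime_of_mem_primeFactors hp).two_le
    have hp2' : (2:ℝ) ≤ p := by exact_mod_cast hp2
    have hlp : 0 ≤ Real.log p := Real.log_nonneg (by linarith)
    split_ifs with h
    · have : 0 ≤ Real.log p / n := by positivity
      linarith
    · have : (n:ℝ) ≤ p := by exact_mod_cast (not_le.1 h).le
      rw [zero_add]
      gcongr
  refine (Finset.sum_le_sum key).trans ?_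
  rw [Finset.sum_add_distrib, ← Finset.sum_div, ← Finset.sum_filter]
  have h1 : (∑ p ∈ D.primeFactors, Real.log p) / n ≤ 1 := by
    rw [div_le_one hn0]
    exact (sum_log_primeFactors D hD).trans hn2
  have h2 : ∑ p ∈ D.primeFactors.filter (fun p => p ≤ n), Real.log p / (p:ℝ) ≤
      ∑ p ∈ Nat.primesLE n, Real.log p / (p : ℝ) := by
    apply Finset.sum_le_sum_of_subset_of_nonneg
    · intro p hp
      rw [mem_filter] at hp
      rw [Nat.mem_primesLE]
      exact ⟨hp.2, Nat.prime_of_mem_primeFactors hp.1⟩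
    · intro p hp _
      rw [Nat.mem_primesLE] at hp
      have : (1:ℝ) ≤ p := by exact_mod_cast hp.2.one_le
      have := Real.log_nonneg this
      positivity
  have h3 := mertens_upper n (by omega)
  have h4 : Real.log n ≤ Real.log (l + 1) := Real.log_le_log hn0 hn1
  linarith

theorem error_const : ∃ K : ℝ, 0 ≤ K ∧ ∀ P : Finset ℕ,
    ∑ p ∈ P, Real.log p / (p * √(p:ℝ)) ≤ K := by
  have hs : Summable fun n : ℕ => 4 * (1 / (n:ℝ) ^ ((5:ℝ)/4)) :=
    (Real.summable_one_div_nat_rpow.2 (by norm_num)).mul_left 4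
  refine ⟨∑' n : ℕ, 4 * (1 / (n:ℝ) ^ ((5:ℝ)/4)), tsum_nonneg fun n => by positivity, fun P => ?_⟩
  refine le_trans (Finset.sum_le_sum fun p _ => ?_) (hs.sum_le_tsum P fun n _ => by positivity)
  rcases Nat.eq_zero_or_pos p with rfl | hp
  · simp
  have hp' : (0:ℝ) < p := by exact_mod_cast hp
  have h1 := Real.log_le_rpow_div hp'.le (show (0:ℝ) < 1/4 by norm_num)
  have h2 : (p:ℝ) * √(p:ℝ) = (p:ℝ) ^ ((1:ℝ)/4) * (p:ℝ) ^ ((5:ℝ)/4) := by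
    rw [← Real.rpow_add hp', Real.sqrt_eq_rpow]
    nth_rw 1 [← Real.rpow_one (p:ℝ)]
    rw [← Real.rpow_add hp']; norm_num
  rw [h2, div_le_iff₀ (by positivity)]
  calc Real.log p ≤ _ := h1
    _ = _ := by field_simp

theorem mertens_const : ∃ K : ℝ, 0 ≤ K ∧ ∀ n : ℕ, 1 ≤ n → ∀ D : ℕ, D ≠ 0 →
    2 * Real.log n - 2 * Real.log (Real.log D + 1) - K ≤
      ∑ p ∈ (Nat.primesLE n).filter (fun p => ¬ p ∣ D),
        Real.log p * (2 / (p:ℝ) - 132 / (p * √(p:ℝ))) := by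
  classical
  obtain ⟨K, hK0, hK⟩ := error_const
  have hl4 : 0 ≤ Real.log 4 := Real.log_nonneg (by norm_num)
  refine ⟨136 * K + 2 * Real.log 4 + 4, by positivity, fun n hn D hD => ?_⟩
  set T := (Nat.primesLE n).filter (fun p => ¬ p ∣ D) with hT
  have h1 := mertens_lower n hn
  have h2 : ∑ p ∈ Nat.primesLE n, Real.log p / ((p : ℝ) - 1) ≤
      ∑ p ∈ Nat.primesLE n, Real.log p / (p:ℝ) +
        2 * ∑ p ∈ Nat.primesLE n, Real.log p / (p * √(p:ℝ)) := by
    rw [Finset.mul_sum, ← Finset.sum_add_distrib]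
    refine Finset.sum_le_sum fun p hp => ?_
    rw [Nat.mem_primesLE] at hp
    have hp2 : (2:ℝ) ≤ p := by exact_mod_cast hp.2.two_le
    have hl : 0 ≤ Real.log p := Real.log_nonneg (by linarith)
    have hs : √(p:ℝ) ≤ p := by
      rw [Real.sqrt_le_left (by linarith)]; nlinarith
    have hs0 : 0 < √(p:ℝ) := Real.sqrt_pos.2 (by linarith)
    have a : Real.log p / ((p : ℝ) - 1) ≤ Real.log p / (p:ℝ) + 2 * (Real.log p / (p * p)) := by
      have : Real.log p / (p:ℝ) + 2 * (Real.log p / (p * p)) =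
          Real.log p * (p + 2) / (p * p) := by field_simp
      rw [this, div_le_div_iff₀ (by linarith) (by positivity)]
      nlinarith
    have b : Real.log p / ((p:ℝ) * p) ≤ Real.log p / (p * √(p:ℝ)) := by gcongr
    linarith
  have h3 : ∑ p ∈ Nat.primesLE n, Real.log p / (p:ℝ) ≤
      ∑ p ∈ T, Real.log p / (p:ℝ) + ∑ p ∈ D.primeFactors, Real.log p / (p:ℝ) := by
    rw [← Finset.sum_filter_add_sum_filter_not (Nat.primesLE n) (fun p => ¬ p ∣ D)]
    refine add_le_add le_rfl ?_
    apply Finset.sum_le_sum_of_subset_of_nonneg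
    · intro p hp
      rw [mem_filter, Nat.mem_primesLE, not_not] at hp
      rw [Nat.mem_primeFactors]
      exact ⟨hp.1.2, hp.2, hD⟩
    · intro p hp _
      have : (1:ℝ) ≤ p := by exact_mod_cast (Nat.prime_of_mem_primeFactors hp).one_le
      have := Real.log_nonneg this
      positivity
  have h4 := bad_sum D hD
  have h5 : ∑ p ∈ T, Real.log p * (2 / (p:ℝ) - 132 / (p * √(p:ℝ))) =
      2 * ∑ p ∈ T, Real.log p / (p:ℝ) - 132 * ∑ p ∈ T, Real.log p / (p * √(p:ℝ)) := by
    rw [Finset.mul_sum, Finset.mul_sum, ← Finset.sum_sub_distrib]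
    exact Finset.sum_congr rfl fun p _ => by ring
  have h6 := hK T
  have h7 := hK (Nat.primesLE n)
  rw [h5]
  linarith

end Quintic

end

section

namespace Quintic

open Finset

theorem pairs_lower (S : Finset ℤ) (p : ℕ) :
    (S.card : ℝ) ^ 2 ≤ ((S.image (Int.cast : ℤ → ZMod p)).card : ℝ) *
      (((S ×ˢ S).filter fun z : ℤ × ℤ => (p : ℤ) ∣ z.1 - z.2).card : ℝ) := by
  classical
  set T := S.image (Int.cast : ℤ → ZMod p) with hT
  set f : ZMod p → ℝ := fun r => ((S.filter fun a : ℤ => (a : ZMod p) = r).card : ℝ) with hf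
  have h1 : (S.card : ℝ) = ∑ r ∈ T, f r := by
    rw [Finset.card_eq_sum_card_image (Int.cast : ℤ → ZMod p) S]; push_cast; rfl
  have h2 : (((S ×ˢ S).filter fun z : ℤ × ℤ => (p : ℤ) ∣ z.1 - z.2).card : ℝ) =
      ∑ r ∈ T, f r ^ 2 := by
    have hm : ∀ z ∈ (S ×ˢ S).filter (fun z : ℤ × ℤ => (p : ℤ) ∣ z.1 - z.2),
        (z.1 : ZMod p) ∈ T := by
      intro z hz
      rw [mem_filter, mem_product] at hz
      exact mem_image_of_mem _ hz.1.1
    rw [Finset.card_eq_sum_card_fiberwise hm]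
    push_cast
    refine Finset.sum_congr rfl fun r _ => ?_
    rw [hf, pow_two]
    simp only
    rw [← Nat.cast_mul, ← card_product]
    congr 2
    ext ⟨a, b⟩
    simp only [mem_filter, mem_product]
    have : (p : ℤ) ∣ a - b ↔ (a : ZMod p) = (b : ZMod p) := by
      rw [← ZMod.intCast_zmod_eq_zero_iff_dvd, Int.cast_sub, sub_eq_zero]
    rw [this]
    constructor
    · rintro ⟨⟨⟨h1, h2⟩, h3⟩, h4⟩
      exact ⟨⟨h1, h4⟩, h2, by rw [← h3, h4]⟩
    · rintro ⟨⟨h1, h2⟩, h3, h4⟩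
      exact ⟨⟨⟨h1, h3⟩, by rw [h2, h4]⟩, h2⟩
  rw [h1, h2]
  exact sq_sum_le_card_mul_sum_sq

theorem sum_log_dvd (P : Finset ℕ) (hP : ∀ p ∈ P, p.Prime) (d : ℤ) (hd : d ≠ 0) :
    ∑ p ∈ P, (if (p : ℤ) ∣ d then Real.log p else 0) ≤ Real.log |(d : ℝ)| := by
  rw [← Finset.sum_filter]
  have h1 : ∑ p ∈ P.filter (fun p : ℕ => (p : ℤ) ∣ d), Real.log p ≤
      ∑ p ∈ d.natAbs.primeFactors, Real.log p := by
    apply Finset.sum_le_sum_of_subset_of_nonneg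
    · intro p hp
      rw [mem_filter] at hp
      rw [Nat.mem_primeFactors]
      exact ⟨hP p hp.1, Int.natCast_dvd.1 hp.2, by omega⟩
    · intro p hp _
      have : (1:ℝ) ≤ p := by exact_mod_cast (Nat.prime_of_mem_primeFactors hp).one_le
      exact Real.log_nonneg this
  have h2 := sum_log_primeFactors d.natAbs (by omega)
  rw [Nat.cast_natAbs, Int.cast_abs] at h2
  linarith

theorem larger_sieve (S : Finset ℤ) (N : ℝ) (hN : 1 ≤ N)
    (hS : ∀ a ∈ S, ∀ b ∈ S, |(a : ℝ) - b| ≤ N) (P : Finset ℕ) (hP : ∀ p ∈ P, p.Prime)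
    (w : ℕ → ℝ) (hw : ∀ p ∈ P, w p * ((S.image (Int.cast : ℤ → ZMod p)).card : ℝ) ≤ 1) :
    (S.card : ℝ) * (∑ p ∈ P, Real.log p * w p - Real.log N) ≤ ∑ p ∈ P, Real.log p := by
  classical
  rcases S.eq_empty_or_nonempty with rfl | hne
  · simp only [card_empty, Nat.cast_zero, zero_mul]
    refine Finset.sum_nonneg fun p hp => Real.log_nonneg ?_
    exact_mod_cast (hP p hp).one_le
  have hlogN := Real.log_nonneg hN
  set s : ℝ := (S.card : ℝ) with hs
  have hs0 : 0 < s := by rw [hs]; exact_mod_cast hne.card_pos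
  set G : ℤ × ℤ → ℝ := fun z => ∑ p ∈ P, (if (p : ℤ) ∣ z.1 - z.2 then Real.log p else 0) with hG
  have hup : ∑ z ∈ S ×ˢ S, G z ≤ s ^ 2 * Real.log N + s * ∑ p ∈ P, Real.log p := by
    have hz : ∀ z ∈ S ×ˢ S, G z ≤ Real.log N + (if z.1 = z.2 then ∑ p ∈ P, Real.log p else 0) := by
      rintro ⟨a, b⟩ hz
      rw [mem_product] at hz
      simp only at hz ⊢
      split_ifs with h
      · have : G (a, b) = ∑ p ∈ P, Real.log p := by
          rw [hG]; simp [h]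
        rw [this]; linarith
      · rw [add_zero]
        have hne : a - b ≠ 0 := sub_ne_zero.2 h
        refine (sum_log_dvd P hP (a - b) hne).trans ?_
        apply Real.log_le_log
        · rw [abs_pos]; exact_mod_cast hne
        · push_cast; exact hS a hz.1 b hz.2
    refine (Finset.sum_le_sum hz).trans (le_of_eq ?_)
    rw [Finset.sum_add_distrib, Finset.sum_const, card_product, nsmul_eq_mul]
    congr 1
    · push_cast; ring
    · rw [Finset.sum_product]
      have : ∀ a ∈ S, ∑ b ∈ S, (if a = b then ∑ p ∈ P, Real.log p else 0) = ∑ p ∈ P, Real.log p := by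
        intro a ha
        rw [Finset.sum_ite_eq]; simp [ha]
      simp only
      rw [Finset.sum_congr rfl this, Finset.sum_const, nsmul_eq_mul]
  have hlow : s ^ 2 * ∑ p ∈ P, Real.log p * w p ≤ ∑ z ∈ S ×ˢ S, G z := by
    rw [hG, Finset.sum_comm, Finset.mul_sum]
    refine Finset.sum_le_sum fun p hp => ?_
    rw [← Finset.sum_filter, Finset.sum_const, nsmul_eq_mul]
    have hl : 0 ≤ Real.log p := Real.log_nonneg (by exact_mod_cast (hP p hp).one_le)
    have h1 := pairs_lower S p
    have h2 := hw p hp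
    set t : ℝ := ((S.image (Int.cast : ℤ → ZMod p)).card : ℝ)
    set q : ℝ := (((S ×ˢ S).filter fun z : ℤ × ℤ => (p : ℤ) ∣ z.1 - z.2).card : ℝ) with hq
    have hq0 : 0 ≤ q := by rw [hq]; positivity
    have h3 : s ^ 2 * w p ≤ q := by
      rcases le_total (w p) 0 with h | h
      · nlinarith [sq_nonneg s]
      · calc s ^ 2 * w p ≤ (t * q) * w p := by gcongr
          _ = q * (w p * t) := by ring
          _ ≤ q * 1 := by gcongr
          _ = q := mul_one q
    calc s ^ 2 * (Real.log p * w p) = (s ^ 2 * w p) * Real.log p := by ring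
      _ ≤ q * Real.log p := by gcongr
  have : s * (s * (∑ p ∈ P, Real.log p * w p - Real.log N)) ≤ s * ∑ p ∈ P, Real.log p := by
    nlinarith
  exact le_of_mul_le_mul_left this hs0

theorem oneD : ∃ K : ℝ, 0 < K ∧ ∀ X : ℝ, 1 ≤ X → ∀ D : ℕ, D ≠ 0 → ∀ S : Finset ℤ,
    (∀ x ∈ S, (|x| : ℝ) ≤ X) →
    (∀ p : ℕ, p.Prime → ¬ p ∣ D →
      ((S.image (Int.cast : ℤ → ZMod p)).card : ℝ) ≤ p / 2 + 33 * √(p:ℝ)) →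
    (S.card : ℝ) ≤ K * √X * (Real.log D + 1) := by
  classical
  obtain ⟨K, hK0, hK⟩ := mertens_const
  refine ⟨2 * √2 * Real.exp (K / 2 + 1), by positivity, fun X hX D hD S hS hres => ?_⟩
  have hl0 : 0 ≤ Real.log D := Real.log_nonneg (by exact_mod_cast Nat.one_le_iff_ne_zero.2 hD)
  set l := Real.log D + 1 with hl
  have hl1 : 1 ≤ l := by linarith
  set R : ℝ := √(2 * X) * Real.exp (K / 2 + 1) * l with hR
  have hsq : 1 ≤ √(2 * X) := by rw [Real.one_le_sqrt]; linarith
  have hexp : 1 ≤ Real.exp (K / 2 + 1) := Real.one_le_exp (by linarith)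
  have hR1 : 1 ≤ R := by
    rw [hR]
    exact one_le_mul_of_one_le_of_one_le (one_le_mul_of_one_le_of_one_le hsq hexp) hl1
  set m := ⌈R⌉₊ with hm
  have hmR : R ≤ m := Nat.le_ceil R
  have hm2 : (m:ℝ) ≤ 2 * R := by
    have := Nat.ceil_lt_add_one (show 0 ≤ R by linarith)
    linarith
  have hm1 : 1 ≤ m := by
    have : (1:ℝ) ≤ m := by linarith
    exact_mod_cast this
  set P := (Nat.primesLE m).filter (fun p => ¬ p ∣ D) with hPdef
  have h1 := hK m hm1 D hD
  have h2 := larger_sieve S (2 * X) (by linarith) (by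
    intro a ha b hb
    have ha := abs_le.1 (hS a ha)
    have hb := abs_le.1 (hS b hb)
    rw [abs_le]; constructor <;> linarith) P (by
      intro p hp
      rw [hPdef, mem_filter, Nat.mem_primesLE] at hp
      exact hp.1.2) (fun p => 2 / (p:ℝ) - 132 / (p * √(p:ℝ))) (by
      intro p hp
      rw [hPdef, mem_filter, Nat.mem_primesLE] at hp
      have h3 := hres p hp.1.2 hp.2
      have hp0 : (0:ℝ) < p := by exact_mod_cast hp.1.2.pos
      have hs0 : 0 < √(p:ℝ) := Real.sqrt_pos.2 hp0
      have hss : √(p:ℝ) * √(p:ℝ) = p := Real.mul_self_sqrt hp0.le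
      set t : ℝ := ((S.image (Int.cast : ℤ → ZMod p)).card : ℝ) with ht
      have ht0 : 0 ≤ t := by rw [ht]; positivity
      set r := √(p:ℝ) with hr
      rcases le_total (2 / (p:ℝ) - 132 / (p * r)) 0 with h | h
      · nlinarith
      · refine (mul_le_mul_of_nonneg_left h3 h).trans ?_
        rw [← hss]
        have : (2 / (r * r) - 132 / (r * r * r)) * (r * r / 2 + 33 * r) = 1 - 4356 / (r * r) := by
          field_simp; ring
        rw [this]
        have : 0 ≤ 4356 / (r * r) := by positivity
        linarith)
  have h3 : ∑ p ∈ P, Real.log p ≤ Real.log 4 * m := by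
    have := Chebyshev.theta_le_log4_mul_x (x := m) (by positivity)
    rw [Chebyshev.theta_eq_sum_primesLE_log] at this
    refine le_trans (Finset.sum_le_sum_of_subset_of_nonneg (Finset.filter_subset _ _) ?_) this
    intro p hp _
    rw [Nat.mem_primesLE] at hp
    exact Real.log_nonneg (by exact_mod_cast hp.2.one_le)
  have h4 : Real.log R ≤ Real.log m := Real.log_le_log (by linarith) hmR
  have h5 : Real.log R = Real.log (2 * X) / 2 + (K / 2 + 1) + Real.log l := by
    rw [hR, Real.log_mul (by positivity) (by positivity), Real.log_mul (by positivity)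
      (by positivity), Real.log_exp, Real.log_sqrt (by linarith)]
  have h6 : 2 ≤ ∑ p ∈ P, Real.log p * (2 / (p:ℝ) - 132 / (p * √(p:ℝ))) - Real.log (2 * X) := by
    linarith
  have hS0 : (0:ℝ) ≤ S.card := by positivity
  have hl4 : Real.log 4 ≤ 2 := by
    have : Real.log 4 = 2 * Real.log 2 := by
      rw [show (4:ℝ) = 2 ^ 2 by norm_num, Real.log_pow]; norm_num
    have := Real.log_two_lt_d9
    linarith
  have h7 : (S.card : ℝ) * 2 ≤ 2 * m := by
    calc (S.card : ℝ) * 2 ≤ _ := mul_le_mul_of_nonneg_left h6 hS0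
      _ ≤ _ := h2
      _ ≤ _ := h3
      _ ≤ 2 * m := by gcongr
  have h8 : √(2 * X) = √2 * √X := Real.sqrt_mul (by norm_num) X
  calc (S.card : ℝ) ≤ m := by linarith
    _ ≤ 2 * R := hm2
    _ = _ := by rw [hR, h8]; ring

end Quintic

end

section

namespace Quintic

section
open Polynomial

theorem residues {p : ℕ} [Fact p.Prime] (hp2 : p ≠ 2) (f : (ZMod p)[X]) (hf : f.natDegree ≤ 6)
    (hns : ∀ c h, f ≠ C c * h ^ 2) (T : Finset (ZMod p)) (hT : ∀ t ∈ T, IsSquare (f.eval t)) :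
    (T.card : ℝ) ≤ p / 2 + 33 * √(p:ℝ) := by
  classical
  have hw := (le_abs_self _).trans (weil f hf hns)
  have hf0 : f ≠ 0 := fun h => hns 0 0 (by rw [h]; simp)
  have hchar : ringChar (ZMod p) ≠ 2 := by rwa [ZMod.ringChar_zmod_n]
  have key : ∀ t : ZMod p, (2 * (if t ∈ T then 1 else 0) : ℤ) ≤
      1 + quadraticChar (ZMod p) (f.eval t) + (if t ∈ f.roots.toFinset then 1 else 0) := by
    intro t
    have hroot : t ∈ f.roots.toFinset ↔ f.eval t = 0 := by
      rw [Multiset.mem_toFinset, mem_roots hf0]; rfl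
    by_cases h0 : f.eval t = 0
    · rw [if_pos (hroot.2 h0), h0]
      simp only [MulChar.map_zero]
      split_ifs <;> norm_num
    · rw [if_neg (fun h => h0 (hroot.1 h))]
      by_cases ht : t ∈ T
      · rw [(quadraticChar_one_iff_isSquare h0).2 (hT t ht), if_pos ht]; norm_num
      · rw [if_neg ht]
        rcases quadraticChar_dichotomy h0 with h | h <;> rw [h] <;> norm_num
  have h1 := Finset.sum_le_sum fun t (_ : t ∈ (Finset.univ : Finset (ZMod p))) => key t
  rw [Finset.sum_add_distrib, Finset.sum_add_distrib, ← Finset.mul_sum] at h1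
  simp only [Finset.sum_ite_mem, Finset.univ_inter, Finset.sum_const, Finset.card_univ, ZMod.card,
    nsmul_eq_mul, mul_one] at h1
  have h2 : (f.roots.toFinset.card : ℤ) ≤ 6 := by
    exact_mod_cast (Multiset.toFinset_card_le _).trans ((card_roots' f).trans hf)
  have h3 : (2 * (T.card : ℤ)) ≤ p + ∑ x, quadraticChar (ZMod p) (f.eval x) + 6 := by
    linarith
  have h4 : (2 * (T.card : ℝ)) ≤ p + ((∑ x, quadraticChar (ZMod p) (f.eval x) : ℤ) : ℝ) + 6 := by
    exact_mod_cast h3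
  have h5 : 1 ≤ √(p:ℝ) := by
    rw [Real.one_le_sqrt]
    exact_mod_cast (Fact.out : p.Prime).one_le
  linarith

/-- the one variable polynomial obtained by fixing the second variable -/
noncomputable def slice (p : ℕ) (c : Fin 6 → ℤ) (y : ZMod p) : (ZMod p)[X] :=
  qf (fun i => C (c i : ZMod p)) X (C y)

theorem slice_natDegree (p : ℕ) (c : Fin 6 → ℤ) (y : ZMod p) : (slice p c y).natDegree ≤ 6 := by
  unfold slice qf
  compute_degree
  norm_num

theorem slice_eval (p : ℕ) (c : Fin 6 → ℤ) (y x : ZMod p) :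
    (slice p c y).eval x = qf (fun i => (c i : ZMod p)) x y := by
  unfold slice qf
  simp
  ring

theorem slice_ns {p : ℕ} [Fact p.Prime] (c : Fin 6 → ℤ) (hg : Good c p) (y : ZMod p) (hy : y ≠ 0)
    (k : ZMod p) (h : (ZMod p)[X]) : slice p c y ≠ C k * h ^ 2 := by
  intro he
  have h1 : (slice p c y).comp (C y * X) = C (y ^ 5) * qf (fun i => C (c i : ZMod p)) X 1 := by
    unfold slice qf
    simp
    ring
  rw [he] at h1
  apply hg 0 1 (Or.inr one_ne_zero) (k / y ^ 5) (h.comp (C y * X))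
  have h2 : C (k / y ^ 5) = C ((y ^ 5)⁻¹) * C k := by
    rw [← C_mul]; congr 1; field_simp
  have h3 : (C ((y ^ 5)⁻¹) : (ZMod p)[X]) * C (y ^ 5) = 1 := by
    rw [← C_mul, inv_mul_cancel₀ (pow_ne_zero _ hy), C_1]
  simp only [map_zero, zero_mul, zero_add, map_one, mul_one]
  rw [h2, mul_assoc]
  simp only [mul_comp, C_comp, pow_comp] at h1
  rw [h1, ← mul_assoc, h3, one_mul]

theorem slice_ns0 {p : ℕ} [Fact p.Prime] (c : Fin 6 → ℤ) (h0 : (c 0 : ZMod p) ≠ 0)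
    (k : ZMod p) (h : (ZMod p)[X]) : slice p c 0 ≠ C k * h ^ 2 := by
  intro he
  have h1 : slice p c 0 = C (c 0 : ZMod p) * X ^ 5 := by
    unfold slice qf
    simp
  rw [h1] at he
  have h2 := congrArg natDegree he
  rw [natDegree_C_mul_X_pow _ _ h0] at h2
  have hk : k ≠ 0 := by
    rintro rfl
    simp at h2
  rw [natDegree_C_mul hk, natDegree_pow] at h2
  omega

end

open Finset

theorem residues_form (c : Fin 6 → ℤ) (p : ℕ) (hp : p.Prime) (hp2 : p ≠ 2) (y : ℤ)
    (hns : ∀ (k : ZMod p) (h : Polynomial (ZMod p)), slice p c (y : ZMod p) ≠ Polynomial.C k * h ^ 2)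
    (S : Finset ℤ) (hS : ∀ x ∈ S, ∃ n : ℤ, qf c x y = n ^ 2) :
    ((S.image (Int.cast : ℤ → ZMod p)).card : ℝ) ≤ p / 2 + 33 * √(p:ℝ) := by
  have : Fact p.Prime := ⟨hp⟩
  refine residues hp2 (slice p c y) (slice_natDegree p c y) hns _ ?_
  intro t ht
  obtain ⟨x, hx, rfl⟩ := mem_image.1 ht
  obtain ⟨n, hn⟩ := hS x hx
  rw [slice_eval, ← qf_cast, hn]
  exact ⟨(n : ZMod p), by push_cast; ring⟩

theorem part_C : ∃ K : ℝ, 0 < K ∧ ∀ c : Fin 6 → ℤ, NonExc c → ∀ H : ℕ, 1 ≤ H →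
    (∀ i, |c i| ≤ H) → ∀ X Y : ℝ, 1 ≤ X → 1 ≤ Y → ∀ Z : Finset (ℤ × ℤ),
    (∀ z ∈ Z, (|z.1| : ℝ) ≤ X ∧ (|z.2| : ℝ) ≤ Y ∧ ∃ n : ℤ, n ≠ 0 ∧ qf c z.1 z.2 = n ^ 2) →
    (Z.card : ℝ) ≤ K * (Y * √X) * Real.log (2 * H * X * Y) := by
  classical
  obtain ⟨K, hK0, hK⟩ := oneD
  refine ⟨3 * (K * 604), by positivity, ?_⟩
  intro c hc H hH1 hH X Y hX hY Z hZ
  set L := Real.log (2 * H * X * Y) with hL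
  have hHR : (1:ℝ) ≤ H := by exact_mod_cast hH1
  have hL2 : 0.69 ≤ L := by
    have := Real.log_two_gt_d9
    have h2 : Real.log 2 ≤ L := Real.log_le_log (by norm_num) (by
      have : 1 ≤ X * Y := by nlinarith
      nlinarith)
    linarith
  obtain ⟨D, hD0, hD, hgood⟩ := good_primes hc H hH1 hH
  have hDL : Real.log D ≤ 600 * L := by
    have hDR : (D : ℝ) ≤ (2 * H) ^ 600 := by exact_mod_cast hD
    have : (0:ℝ) < D := by exact_mod_cast Nat.pos_of_ne_zero hD0
    have h1 : Real.log D ≤ Real.log ((2 * H) ^ 600) := Real.log_le_log (by positivity) hDR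
    rw [Real.log_pow] at h1
    push_cast at h1
    have hlH : Real.log (2 * H) ≤ L := by
      apply Real.log_le_log (by positivity)
      have : (0:ℝ) < 2 * H := by positivity
      have : 1 ≤ X * Y := by nlinarith
      nlinarith
    linarith
  clear hD
  have hDpos : (0:ℝ) < D := by exact_mod_cast Nat.pos_of_ne_zero hD0
  -- bound for each slice
  have hfib : ∀ y : ℤ, (|y| : ℝ) ≤ Y → ((Z.filter fun z => z.2 = y).card : ℝ) ≤
      K * √X * (604 * L) := by
    intro y hy
    set S := (Z.filter fun z => z.2 = y).image Prod.fst with hSdef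
    have hcard : (Z.filter fun z => z.2 = y).card = S.card := by
      rw [hSdef, card_image_of_injOn]
      rintro ⟨a, b⟩ ha ⟨a', b'⟩ ha' h
      simp only [coe_filter, Set.mem_ofPred_eq] at ha ha' h
      rw [Prod.mk.injEq]
      exact ⟨h, ha.2.trans ha'.2.symm⟩
    have hSmem : ∀ x ∈ S, (|x| : ℝ) ≤ X ∧ ∃ n : ℤ, n ≠ 0 ∧ qf c x y = n ^ 2 := by
      intro x hx
      rw [hSdef, mem_image] at hx
      obtain ⟨⟨a, b⟩, hz, rfl⟩ := hx
      rw [mem_filter] at hz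
      obtain ⟨h1, h2, h3⟩ := hZ _ hz.1
      have hb : b = y := hz.2
      subst hb
      exact ⟨h1, h3⟩
    rw [hcard]
    have main : ∀ e : ℤ, e ≠ 0 → (|e| : ℝ) ≤ 2 * H * X * Y →
        (∀ p : ℕ, p.Prime → Good c p → ¬ (p : ℤ) ∣ e →
          ∀ (k : ZMod p) (h : Polynomial (ZMod p)), slice p c (y : ZMod p) ≠ Polynomial.C k * h ^ 2) →
        (S.card : ℝ) ≤ K * √X * (604 * L) := by
      intro e he heL hns
      have heA : (0:ℝ) < e.natAbs := by exact_mod_cast Int.natAbs_pos.2 he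
      have h1 := hK X hX (2 * D * e.natAbs) (by
        have := Int.natAbs_pos.2 he
        positivity) S (fun x hx => (hSmem x hx).1) (by
          intro p hp hpd
          refine residues_form c p hp ?_ y (hns p hp (hgood p hp ?_) ?_) S ?_
          · rintro rfl
            exact hpd (Dvd.dvd.mul_right (dvd_mul_right 2 D) _)
          · intro h
            exact hpd (Dvd.dvd.mul_right (Dvd.dvd.mul_left h 2) _)
          · intro h
            exact hpd (Dvd.dvd.mul_left (Int.natCast_dvd.1 h) _)
          · intro x hx
            obtain ⟨n, -, hn⟩ := (hSmem x hx).2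
            exact ⟨n, hn⟩)
      refine h1.trans ?_
      have h2 : Real.log ((2 * D * e.natAbs : ℕ) : ℝ) ≤ Real.log 2 + 600 * L + L := by
        push_cast
        rw [Real.log_mul (by positivity) (by positivity), Real.log_mul (by positivity)
          (by positivity)]
        have : Real.log (e.natAbs : ℝ) ≤ L := by
          apply Real.log_le_log heA
          rw [Nat.cast_natAbs]; push_cast; exact heL
        linarith
      have := Real.log_two_lt_d9
      gcongr
      linarith
    by_cases hy0 : y = 0
    · subst hy0
      by_cases hc0 : c 0 = 0
      · have : S = ∅ := by
          rw [Finset.eq_empty_iff_forall_notMem]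
          intro x hx
          obtain ⟨n, hn0, hn⟩ := (hSmem x hx).2
          have : qf c x 0 = 0 := by unfold qf; rw [hc0]; ring
          rw [this] at hn
          exact hn0 (pow_eq_zero_iff two_ne_zero |>.1 hn.symm)
        rw [this]
        simp only [card_empty, Nat.cast_zero]
        positivity
      · refine main (c 0) hc0 ?_ ?_
        · have : (|(c 0)| : ℝ) ≤ H := by exact_mod_cast hH 0
          refine this.trans ?_
          have : 1 ≤ X * Y := by nlinarith
          nlinarith
        · intro p hp _ hpd k h
          have : Fact p.Prime := ⟨hp⟩
          rw [Int.cast_zero]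
          exact slice_ns0 c (by rwa [Ne, ZMod.intCast_zmod_eq_zero_iff_dvd]) k h
    · refine main y hy0 ?_ ?_
      · refine hy.trans ?_
        have : 1 ≤ 2 * H * X := by nlinarith
        nlinarith
      · intro p hp hg hpd k h
        have : Fact p.Prime := ⟨hp⟩
        exact slice_ns c hg y (by rwa [Ne, ZMod.intCast_zmod_eq_zero_iff_dvd]) k h
  have hmaps : ∀ z ∈ Z, z.2 ∈ Icc (-(⌊Y⌋₊ : ℤ)) ⌊Y⌋₊ := by
    intro z hz
    rw [mem_Icc]
    exact abs_le.1 (abs_le_floor _ _ (hZ z hz).2.1)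
  rw [Finset.card_eq_sum_card_fiberwise hmaps]
  push_cast
  have hYf := Nat.floor_le (show 0 ≤ Y by linarith)
  refine (Finset.sum_le_card_nsmul _ _ (K * √X * (604 * L)) ?_).trans ?_
  · intro y hy
    apply hfib
    rw [mem_Icc] at hy
    have : |y| ≤ (⌊Y⌋₊ : ℤ) := abs_le.2 hy
    have : ((|y| : ℤ) : ℝ) ≤ ((⌊Y⌋₊ : ℤ) : ℝ) := by exact_mod_cast this
    push_cast at this
    linarith
  · rw [Int.card_Icc, nsmul_eq_mul]
    have e : ((⌊Y⌋₊ : ℤ) + 1 - -(⌊Y⌋₊ : ℤ)).toNat = 2 * ⌊Y⌋₊ + 1 := by omega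
    rw [e]
    push_cast
    calc (2 * (⌊Y⌋₊ : ℝ) + 1) * (K * √X * (604 * L)) ≤ (3 * Y) * (K * √X * (604 * L)) := by
          gcongr; linarith
      _ = _ := by ring

end Quintic

end

section

namespace Quintic

open Finset

/-- reversed coefficients -/
def rev (c : Fin 6 → ℤ) : Fin 6 → ℤ := ![c 5, c 4, c 3, c 2, c 1, c 0]

theorem qf_rev (c : Fin 6 → ℤ) (x y : ℤ) : qf (rev c) x y = qf c y x := by
  unfold qf rev
  simp [Fin.isValue]
  ring

theorem qf_rev_rat (c : Fin 6 → ℤ) (x y : ℚ) :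
    qf (fun i => ((rev c) i : ℚ)) x y = qf (fun i => (c i : ℚ)) y x := by
  unfold qf rev
  simp [Fin.isValue]
  ring

theorem nonExc_rev {c : Fin 6 → ℤ} (hc : NonExc c) : NonExc (rev c) := by
  rintro ⟨l, m, q0, q1, q2, h⟩
  refine hc ⟨m, l, q2, q1, q0, fun x y => ?_⟩
  rw [← qf_rev_rat, h]
  ring

theorem rev_bound {c : Fin 6 → ℤ} {H : ℕ} (hH : ∀ i, |c i| ≤ H) : ∀ i, |rev c i| ≤ H := by
  intro i
  fin_cases i <;> exact hH _

theorem exponent_bound (X Y : ℝ) (hX : 1 ≤ X) (hY : 1 ≤ Y) (h : Y ^ 2 ≤ X) :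
    Y * √X ≤ (X * Y) ^ ((2:ℝ)/3) := by
  have hQ : 0 ≤ (X * Y) ^ ((2:ℝ)/3) := by positivity
  have h3 : ((X * Y) ^ ((2:ℝ)/3)) ^ 6 = (X * Y) ^ 4 := by
    rw [← Real.rpow_natCast, ← Real.rpow_mul (by positivity), ← Real.rpow_natCast]; norm_num
  have h4 : (Y * √X) ^ 6 = Y ^ 6 * X ^ 3 := by
    have : √X ^ 2 = X := Real.sq_sqrt (by linarith)
    calc (Y * √X) ^ 6 = Y ^ 6 * (√X ^ 2) ^ 3 := by ring
      _ = _ := by rw [this]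
  refine le_of_pow_le_pow_left₀ (n := 6) (by norm_num) hQ ?_
  rw [h3, h4]
  calc Y ^ 6 * X ^ 3 = (Y ^ 4 * X ^ 3) * Y ^ 2 := by ring
    _ ≤ (Y ^ 4 * X ^ 3) * X := by gcongr
    _ = _ := by ring

theorem exponent_bound2 (X Y : ℝ) (hX : 1 ≤ X) (hY : 1 ≤ Y) (h : X ≤ Y ^ 2) :
    X ≤ (X * Y) ^ ((2:ℝ)/3) := by
  have hQ : 0 ≤ (X * Y) ^ ((2:ℝ)/3) := by positivity
  have h3 : ((X * Y) ^ ((2:ℝ)/3)) ^ 3 = (X * Y) ^ 2 := by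
    rw [← Real.rpow_natCast, ← Real.rpow_mul (by positivity), ← Real.rpow_natCast]; norm_num
  refine le_of_pow_le_pow_left₀ (n := 3) (by norm_num) hQ ?_
  rw [h3]
  calc X ^ 3 = X ^ 2 * X := by ring
    _ ≤ X ^ 2 * Y ^ 2 := by gcongr
    _ = _ := by ring

theorem main_bound : ∃ K : ℝ, 0 < K ∧ ∀ c : Fin 6 → ℤ, NonExc c → ∀ H : ℕ, 1 ≤ H →
    (∀ i, |c i| ≤ H) → ∀ X Y : ℝ, 1 ≤ X → 1 ≤ Y → ∀ Z : Finset (ℤ × ℤ),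
    (∀ z ∈ Z, (|z.1| : ℝ) ≤ X ∧ (|z.2| : ℝ) ≤ Y ∧ ∃ n : ℤ, n ≠ 0 ∧ qf c z.1 z.2 = n ^ 2) →
    (Z.card : ℝ) ≤ K * (X * Y) ^ ((2:ℝ)/3) * Real.log (2 * H * X * Y) ^ 2 := by
  obtain ⟨K1, hK1, h1⟩ := part_B
  obtain ⟨K2, hK2, h2⟩ := part_C
  refine ⟨3 * K1 + 2 * K2, by positivity, ?_⟩
  intro c hc H hH1 hH X Y hX hY Z hZ
  have hb := h1 c hc H hH1 hH X Y hX hY Z hZ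
  have hc1 := h2 c hc H hH1 hH X Y hX hY Z hZ
  have hc2 := h2 (rev c) (nonExc_rev hc) H hH1 (rev_bound hH) Y X hY hX
    (Z.map (Equiv.prodComm ℤ ℤ).toEmbedding) (by
      intro z hz
      rw [mem_map] at hz
      obtain ⟨⟨a, b⟩, hw, rfl⟩ := hz
      obtain ⟨e1, e2, n, hn, e3⟩ := hZ _ hw
      refine ⟨e2, e1, n, hn, ?_⟩
      rw [qf_rev]
      exact e3)
  rw [card_map] at hc2
  have e : (2 * (H:ℝ) * Y * X) = 2 * H * X * Y := by ring
  rw [e] at hc2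
  set L := Real.log (2 * H * X * Y) with hL
  have hHR : (1:ℝ) ≤ H := by exact_mod_cast hH1
  have hL2 : 0.69 ≤ L := by
    have := Real.log_two_gt_d9
    have h2 : Real.log 2 ≤ L := Real.log_le_log (by norm_num) (by
      have : 1 ≤ X * Y := by nlinarith
      nlinarith)
    linarith
  have hLL : L ≤ 2 * L ^ 2 := by nlinarith
  set W := (X * Y) ^ ((2:ℝ)/3) with hW
  have hW0 : 0 < W := by positivity
  have hWL : 0 ≤ W * L ^ 2 := by positivity
  by_cases hx : Y ^ 2 ≤ X
  · have := exponent_bound X Y hX hY hx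
    calc (Z.card : ℝ) ≤ K2 * (Y * √X) * L := hc1
      _ ≤ K2 * W * (2 * L ^ 2) := by gcongr
      _ ≤ _ := by nlinarith [mul_nonneg hK1.le hWL]
  by_cases hy : X ^ 2 ≤ Y
  · have := exponent_bound Y X hY hX hy
    rw [mul_comm Y X] at this
    calc (Z.card : ℝ) ≤ K2 * (X * √Y) * L := hc2
      _ ≤ K2 * W * (2 * L ^ 2) := by gcongr
      _ ≤ _ := by nlinarith [mul_nonneg hK1.le hWL]
  have a := exponent_bound2 X Y hX hY (not_le.1 hx).le
  have b := exponent_bound2 Y X hY hX (not_le.1 hy).le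
  rw [mul_comm Y X] at b
  calc (Z.card : ℝ) ≤ K1 * (W + X + Y) * L ^ 2 := hb
    _ ≤ K1 * (W + W + W) * L ^ 2 := by gcongr
    _ ≤ _ := by nlinarith [mul_nonneg hK2.le hWL]

end Quintic

end

namespace Quintic

/-- the coefficients of the quintic form -/
def cf (L L' M M' : ℤ × ℤ) : Fin 6 → ℤ :=
  ![L.1 ^ 2 * M.1 ^ 3 + L'.1 ^ 2 * M'.1 ^ 3,
    3 * L.1 ^ 2 * M.1 ^ 2 * M.2 + 2 * L.1 * L.2 * M.1 ^ 3 +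
      (3 * L'.1 ^ 2 * M'.1 ^ 2 * M'.2 + 2 * L'.1 * L'.2 * M'.1 ^ 3),
    3 * L.1 ^ 2 * M.1 * M.2 ^ 2 + 6 * L.1 * L.2 * M.1 ^ 2 * M.2 + L.2 ^ 2 * M.1 ^ 3 +
      (3 * L'.1 ^ 2 * M'.1 * M'.2 ^ 2 + 6 * L'.1 * L'.2 * M'.1 ^ 2 * M'.2 + L'.2 ^ 2 * M'.1 ^ 3),
    L.1 ^ 2 * M.2 ^ 3 + 6 * L.1 * L.2 * M.1 * M.2 ^ 2 + 3 * L.2 ^ 2 * M.1 ^ 2 * M.2 +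
      (L'.1 ^ 2 * M'.2 ^ 3 + 6 * L'.1 * L'.2 * M'.1 * M'.2 ^ 2 + 3 * L'.2 ^ 2 * M'.1 ^ 2 * M'.2),
    2 * L.1 * L.2 * M.2 ^ 3 + 3 * L.2 ^ 2 * M.1 * M.2 ^ 2 +
      (2 * L'.1 * L'.2 * M'.2 ^ 3 + 3 * L'.2 ^ 2 * M'.1 * M'.2 ^ 2),
    L.2 ^ 2 * M.2 ^ 3 + L'.2 ^ 2 * M'.2 ^ 3]

/-- the exponent vector of the `i`th monomial -/
noncomputable def ev (i : Fin 6) : Fin 2 →₀ ℕ :=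
  Finsupp.single 0 (5 - (i : ℕ)) + Finsupp.single 1 (i : ℕ)

theorem ev_inj {i j : Fin 6} (h : ev i = ev j) : i = j := by
  have := DFunLike.congr_fun h 1
  simp [ev] at this
  exact Fin.ext this

theorem form_expand (L L' M M' : ℤ × ℤ) :
    (linForm L) ^ 2 * (linForm M) ^ 3 + (linForm L') ^ 2 * (linForm M') ^ 3 =
      ∑ i, MvPolynomial.monomial (ev i) (cf L L' M M' i) := by
  have hm : ∀ (i : Fin 6) (a : ℤ), MvPolynomial.monomial (ev i) a =
      MvPolynomial.C a * MvPolynomial.X 0 ^ (5 - (i : ℕ)) * MvPolynomial.X 1 ^ (i : ℕ) := by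
    intro i a
    rw [ev, MvPolynomial.X_pow_eq_monomial, MvPolynomial.X_pow_eq_monomial,
      MvPolynomial.C_mul_monomial, MvPolynomial.monomial_mul]
    simp
  simp only [hm]
  rw [Fin.sum_univ_six]
  unfold linForm cf
  simp only [Matrix.cons_val, map_add, map_mul, map_pow, map_ofNat]
  norm_num
  ring

theorem form_coeff (L L' M M' : ℤ × ℤ) (j : Fin 6) :
    ((linForm L) ^ 2 * (linForm M) ^ 3 + (linForm L') ^ 2 * (linForm M') ^ 3).coeff (ev j) =
      cf L L' M M' j := by
  rw [form_expand, MvPolynomial.coeff_sum]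
  simp only [MvPolynomial.coeff_monomial]
  rw [Finset.sum_eq_single j]
  · simp
  · intro b _ hb
    rw [if_neg fun h => hb (ev_inj h)]
  · simp

theorem form_eval (L L' M M' : ℤ × ℤ) (x y : ℤ) :
    MvPolynomial.eval ![x, y]
      ((linForm L) ^ 2 * (linForm M) ^ 3 + (linForm L') ^ 2 * (linForm M') ^ 3) =
      qf (cf L L' M M') x y := by
  unfold linForm qf cf
  simp
  ring

theorem coeff_le_polyNorm (F : MvPolynomial (Fin 2) ℤ) (d : Fin 2 →₀ ℕ) :
    |F.coeff d| ≤ polyNorm F := by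
  by_cases h : F.coeff d = 0
  · rw [h]; simp
  · rw [Int.abs_eq_natAbs]
    exact_mod_cast Finset.le_sup (f := fun d => (F.coeff d).natAbs) (MvPolynomial.mem_support_iff.2 h)

theorem det_ne_zero {L M : ℤ × ℤ} (h : ¬ Proportional L M) :
    (L.1 : ℚ) * M.2 - L.2 * M.1 ≠ 0 := by
  intro hd
  apply h
  by_cases h1 : (M.1 : ℚ) = 0
  · by_cases h2 : (M.2 : ℚ) = 0
    · right; exact ⟨0, by rw [h1]; ring, by rw [h2]; ring⟩
    · left
      refine ⟨L.2 / M.2, ?_, by field_simp⟩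
      rw [h1] at hd ⊢
      have : (L.1 : ℚ) * M.2 = 0 := by linarith
      rcases mul_eq_zero.1 this with h | h
      · rw [h]; ring
      · exact absurd h h2
  · left
    refine ⟨L.1 / M.1, by field_simp, ?_⟩
    field_simp
    linarith

theorem qf_cf_rat (L L' M M' : ℤ × ℤ) (x y : ℚ) :
    qf (fun i => (cf L L' M M' i : ℚ)) x y =
      (L.1 * x + L.2 * y) ^ 2 * (M.1 * x + M.2 * y) ^ 3 +
        (L'.1 * x + L'.2 * y) ^ 2 * (M'.1 * x + M'.2 * y) ^ 3 := by
  unfold qf cf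
  simp
  ring

end Quintic

open MvPolynomial

/-- There is an absolute constant `C` with the following property. Let `L₁, L₂, M₁, M₂` be
nonzero integral linear forms in two variables such that no two of them are proportional,
except possibly `L₁` and `M₁`, or `L₂` and `M₂`. Put `F = L₁²M₁³ + L₂²M₂³`. Then for all real
`X, Y ≥ 1`, the number of integer pairs `(x, y)` with `|x| ≤ X`, `|y| ≤ Y` for which `F(x, y)`
is a nonzero square is at most `C (XY)^{2/3} (log(2‖F‖XY))²`, unless there are nonzero
rationals `g, ν` with `L₁ = ν(4M₁ - 5g²M₂)` and `L₂ = νg³(5M₁ - 4g²M₂)`. -/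
theorem squares_of_quintic_form :
    ∃ C : ℝ, 0 < C ∧ ∀ L₁ L₂ M₁ M₂ : ℤ × ℤ,
      L₁ ≠ (0, 0) → L₂ ≠ (0, 0) → M₁ ≠ (0, 0) → M₂ ≠ (0, 0) →
      ¬ Proportional L₁ L₂ → ¬ Proportional L₁ M₂ →
      ¬ Proportional L₂ M₁ → ¬ Proportional M₁ M₂ →
      ∀ X Y : ℝ, 1 ≤ X → 1 ≤ Y →
        (∃ g ν : ℚ, g ≠ 0 ∧ ν ≠ 0 ∧
          (L₁.1 : ℚ) = ν * (4 * M₁.1 - 5 * g ^ 2 * M₂.1) ∧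
          (L₁.2 : ℚ) = ν * (4 * M₁.2 - 5 * g ^ 2 * M₂.2) ∧
          (L₂.1 : ℚ) = ν * g ^ 3 * (5 * M₁.1 - 4 * g ^ 2 * M₂.1) ∧
          (L₂.2 : ℚ) = ν * g ^ 3 * (5 * M₁.2 - 4 * g ^ 2 * M₂.2)) ∨
        (({p : ℤ × ℤ | (|p.1| : ℝ) ≤ X ∧ (|p.2| : ℝ) ≤ Y ∧
            ∃ n : ℤ, n ≠ 0 ∧ MvPolynomial.eval ![p.1, p.2]
              ((linForm L₁) ^ 2 * (linForm M₁) ^ 3 +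
                (linForm L₂) ^ 2 * (linForm M₂) ^ 3) = n ^ 2}).ncard : ℝ) ≤
          C * (X * Y) ^ ((2 : ℝ) / 3) *
            Real.log (2 * polyNorm ((linForm L₁) ^ 2 * (linForm M₁) ^ 3 +
              (linForm L₂) ^ 2 * (linForm M₂) ^ 3) * X * Y) ^ 2 := by
  obtain ⟨K, hK, hmain⟩ := Quintic.main_bound
  refine ⟨K, hK, ?_⟩
  intro L₁ L₂ M₁ M₂ _ _ _ _ hLL hLM hLM' hMM X Y hX hY
  by_cases hexc : Quintic.NonExc (Quintic.cf L₁ L₂ M₁ M₂)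
  · right
    set F := (linForm L₁) ^ 2 * (linForm M₁) ^ 3 + (linForm L₂) ^ 2 * (linForm M₂) ^ 3 with hF
    have hbd : ∀ i, |Quintic.cf L₁ L₂ M₁ M₂ i| ≤ polyNorm F := by
      intro i
      rw [← Quintic.form_coeff]
      exact Quintic.coeff_le_polyNorm F _
    have hnorm : 1 ≤ polyNorm F := by
      by_contra h0
      have h0 : polyNorm F = 0 := by omega
      apply hexc
      refine ⟨0, 0, 0, 0, 0, fun x y => ?_⟩
      have hz : ∀ i, Quintic.cf L₁ L₂ M₁ M₂ i = 0 := by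
        intro i
        have := hbd i
        rw [h0] at this
        exact abs_nonpos_iff.1 (by exact_mod_cast this)
      simp [Quintic.qf, hz]
    set S := {p : ℤ × ℤ | (|p.1| : ℝ) ≤ X ∧ (|p.2| : ℝ) ≤ Y ∧
      ∃ n : ℤ, n ≠ 0 ∧ MvPolynomial.eval ![p.1, p.2] F = n ^ 2} with hS
    have hfin : S.Finite := by
      apply Set.Finite.subset (Finset.finite_toSet
        (Finset.Icc (-(⌊X⌋₊ : ℤ)) ⌊X⌋₊ ×ˢ Finset.Icc (-(⌊Y⌋₊ : ℤ)) ⌊Y⌋₊))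
      rintro ⟨a, b⟩ ⟨h1, h2, -⟩
      have h1 := abs_le.1 (Quintic.abs_le_floor _ _ h1)
      have h2 := abs_le.1 (Quintic.abs_le_floor _ _ h2)
      rw [Finset.mem_coe, Finset.mem_product, Finset.mem_Icc, Finset.mem_Icc]
      exact ⟨h1, h2⟩
    rw [Set.ncard_eq_toFinset_card S hfin]
    refine hmain _ hexc (polyNorm F) hnorm hbd X Y hX hY hfin.toFinset ?_
    intro z hz
    rw [Set.Finite.mem_toFinset] at hz
    obtain ⟨h1, h2, n, hn, h3⟩ := hz
    refine ⟨h1, h2, n, hn, ?_⟩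
    rw [← Quintic.form_eval]
    exact h3
  · left
    unfold Quintic.NonExc at hexc
    rw [not_not] at hexc
    obtain ⟨l, m, q0, q1, q2, h⟩ := hexc
    refine Quintic.exc_main L₁.1 L₁.2 L₂.1 L₂.2 M₁.1 M₁.2 M₂.1 M₂.2 (Quintic.det_ne_zero hMM)
      (Quintic.det_ne_zero hLM) ?_ ⟨l, m, q0, q1, q2, fun x y => ?_⟩
    · have := Quintic.det_ne_zero hLM'
      intro h0
      apply this
      linarith
    · rw [← h x y, Quintic.qf_cf_rat]
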